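/- Let (F,*) be a *-Pythagorean field with positive definite involution. Let Q be a continuous *-factor over F with unique rank function N_Q, and assume there exists a *-subalgebra Q_0 of Q of countable F-dimension which is dense for the N_Q-metric. Then the following are equivalent: (i) Q is *-isomorphic to M_F; (ii) Q is *-isomorphic to the completion of some ultramatricial *-algebra B with respect to the metric induced by some extremal pseudo-rank function on B; (iii) for every eps > 0 and all x_1, ..., x_n in Q there exist a *-subalgebra A of Q *-isomorphic to a standard matricial *-algebra and elements y_1, ..., y_n in A with N_Q(x_i - y_i) < eps for all i. -/

import Mathlib

open scoped TensorProduct Kronecker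

noncomputable section

namespace AraClaramunt

/-! ### Pseudo-rank functions and rank metric notions -/

/-- A pseudo-rank function on a unital ring. -/
structure IsPseudoRankFunction {R : Type*} [Ring R] (N : R → ℝ) : Prop where
  nonneg : ∀ x : R, 0 ≤ N x
  le_one : ∀ x : R, N x ≤ 1
  map_one : N 1 = 1
  subadditive : ∀ a b : R, N (a + b) ≤ N a + N b
  mul_le_left : ∀ a b : R, N (a * b) ≤ N a
  mul_le_right : ∀ a b : R, N (a * b) ≤ N b
  add_of_orthogonal : ∀ e f : R, IsIdempotentElem e → IsIdempotentElem f →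
    e * f = 0 → f * e = 0 → N (e + f) = N e + N f

/-- A rank function is a faithful pseudo-rank function. -/
def IsRankFunction {R : Type*} [Ring R] (N : R → ℝ) : Prop :=
  IsPseudoRankFunction N ∧ ∀ x : R, N x = 0 → x = 0

/-- Cauchy sequence for the pseudo-metric `d(x,y) = N (x - y)`. -/
def RankCauchy {R : Type*} [Ring R] (N : R → ℝ) (u : ℕ → R) : Prop :=
  ∀ ε : ℝ, 0 < ε → ∃ n₀ : ℕ, ∀ m n : ℕ, n₀ ≤ m → n₀ ≤ n → N (u m - u n) < ε

/-- Convergence for the pseudo-metric `d(x,y) = N (x - y)`. -/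
def RankTendsto {R : Type*} [Ring R] (N : R → ℝ) (u : ℕ → R) (x : R) : Prop :=
  ∀ ε : ℝ, 0 < ε → ∃ n₀ : ℕ, ∀ n : ℕ, n₀ ≤ n → N (u n - x) < ε

/-- Completeness with respect to the pseudo-metric `d(x,y) = N (x - y)`. -/
def RankComplete {R : Type*} [Ring R] (N : R → ℝ) : Prop :=
  ∀ u : ℕ → R, RankCauchy N u → ∃ x : R, RankTendsto N u x

/-- Density of a subset with respect to the pseudo-metric `d(x,y) = N (x - y)`. -/
def RankDense {R : Type*} [Ring R] (N : R → ℝ) (S : Set R) : Prop :=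
  ∀ x : R, ∀ ε : ℝ, 0 < ε → ∃ y ∈ S, N (x - y) < ε

/-- von Neumann regularity. -/
def VNRegular (R : Type*) [Ring R] : Prop :=
  ∀ x : R, ∃ y : R, x = x * y * x

/-- A continuous factor: a simple, von Neumann regular, right and left self-injective ring
admitting a rank function whose image is all of `[0,1]`. -/
def IsContinuousFactor (R : Type*) [Ring R] : Prop :=
  IsSimpleRing R ∧ VNRegular R ∧ Module.Injective R R ∧ Module.Injective Rᵐᵒᵖ Rᵐᵒᵖ ∧
    ∃ N : R → ℝ, IsRankFunction N ∧ Set.range N = Set.Icc (0 : ℝ) 1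

/-- An extremal pseudo-rank function: an extreme point of the convex set of all
pseudo-rank functions. -/
def IsExtremalPseudoRankFunction {R : Type*} [Ring R] (N : R → ℝ) : Prop :=
  N ∈ Set.extremePoints ℝ {S : R → ℝ | IsPseudoRankFunction S}

/-! ### Matricial and ultramatricial algebras -/

/-- A matricial `K`-algebra. -/
def IsMatricialAlgebra (K : Type*) [Field K] (A : Type*) [Ring A] [Algebra K A] : Prop :=
  ∃ (k : ℕ) (n : Fin (k + 1) → ℕ), (∀ i, 0 < n i) ∧
    Nonempty (A ≃ₐ[K] ((i : Fin (k + 1)) → Matrix (Fin (n i)) (Fin (n i)) K))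

/-- An ultramatricial `K`-algebra: the increasing union of matricial subalgebras. -/
def IsUltramatricialAlgebra (K : Type*) [Field K] (B : Type*) [Ring B] [Algebra K B] : Prop :=
  ∃ C : ℕ → Subalgebra K B, (∀ n, C n ≤ C (n + 1)) ∧
    (∀ n, IsMatricialAlgebra K (C n)) ∧ (∀ b : B, ∃ n, b ∈ C n)

/-- `Q`, with rank function `N`, is the rank-metric completion of a direct limit of the matrix
algebras `M_{p n}(K)`: it is complete and carries a dense increasing tower of unital subalgebras
isomorphic to `M_{p n}(K)`. -/
def IsMatrixTowerCompletion (K : Type*) [Field K] (Q : Type*) [Ring Q] [Algebra K Q]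
    (N : Q → ℝ) (p : ℕ → ℕ) : Prop :=
  IsRankFunction N ∧ RankComplete N ∧
    ∃ A : ℕ → Subalgebra K Q, (∀ n, A n ≤ A (n + 1)) ∧
      (∀ n, Nonempty ((A n) ≃ₐ[K] Matrix (Fin (p n)) (Fin (p n)) K)) ∧
      RankDense N (⋃ n, (A n : Set Q))

/-- `Q` is (a copy of) von Neumann's continuous factor `M_K`, the completion of
`lim_n M_{2^n}(K)` with respect to its unique rank function. -/
def IsMK (K : Type*) [Field K] (Q : Type*) [Ring Q] [Algebra K Q] (N : Q → ℝ) : Prop :=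
  IsMatrixTowerCompletion K Q N (fun n => 2 ^ n)

/-- The canonical block-diagonal unital embedding `M_a(K) → M_b(K)`, `z ↦ z ⊗ 1_g`,
where `b = a * g`. -/
def blockEmbedFun (K : Type*) [Semiring K] {a : ℕ} (g b : ℕ) (h : a * g = b)
    (z : Matrix (Fin a) (Fin a) K) : Matrix (Fin b) (Fin b) K :=
  Matrix.reindex (finProdFinEquiv.trans (finCongr h)) (finProdFinEquiv.trans (finCongr h))
    (z ⊗ₖ (1 : Matrix (Fin g) (Fin g) K))

end AraClaramunt
namespace AraClaramunt

/-! ### Star notions -/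

/-- Properness of an involution: `x* x = 0` implies `x = 0`. -/
def ProperStar (R : Type*) [NonUnitalNonAssocRing R] [Star R] : Prop :=
  ∀ x : R, star x * x = 0 → x = 0

/-- A projection: a self-adjoint idempotent. -/
def IsProjection {R : Type*} [Mul R] [Star R] (p : R) : Prop :=
  star p = p ∧ p * p = p

/-- The order on projections: `q ≤ p` iff `p q = q p = q`. -/
def ProjLE {R : Type*} [Mul R] (q p : R) : Prop :=
  p * q = q ∧ q * p = q

/-- `*`-equivalence of projections: `e = w w*` and `f = w* w` for some `w`. -/
def StarEquivProj {R : Type*} [Mul R] [Star R] (e f : R) : Prop :=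
  ∃ w : R, e = w * star w ∧ f = star w * w

/-- Equivalence of projections: `e = x y`, `f = y x` with `x ∈ eRf`, `y ∈ fRe`. -/
def EquivProj {R : Type*} [Mul R] (e f : R) : Prop :=
  ∃ x y : R, x = e * x * f ∧ y = f * y * e ∧ e = x * y ∧ f = y * x

/-- `y` is the relative inverse of `x` in a `*`-regular ring. -/
def IsRelativeInverse {R : Type*} [Mul R] [Star R] (x y : R) : Prop :=
  x * y * x = x ∧ y * x * y = y ∧ star (x * y) = x * y ∧ star (y * x) = y * x

/-- `e = LP(x)`: `e` is a projection with `x R = e R`. -/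
def IsLeftProjOf {R : Type*} [Mul R] [Star R] (x e : R) : Prop :=
  IsProjection e ∧ e * x = x ∧ ∃ y : R, e = x * y

/-- `f = RP(x)`: `f` is a projection with `R x = R f`. -/
def IsRightProjOf {R : Type*} [Mul R] [Star R] (x f : R) : Prop :=
  IsProjection f ∧ x * f = x ∧ ∃ y : R, f = y * x

/-- Positive definiteness of the involution of a field. -/
def PosDefStar (F : Type*) [Field F] [StarRing F] : Prop :=
  ∀ (n : ℕ) (x : Fin n → F), (∑ i, star (x i) * x i) = 0 → ∀ i, x i = 0

/-- `*`-Pythagorean field. -/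
def StarPythagorean (F : Type*) [Field F] [StarRing F] : Prop :=
  ∀ x y : F, ∃ z : F, x * star x + y * star y = z * star z

/-- A standard matricial `*`-algebra over `(F, *)`: a `*`-algebra `*`-isomorphic to a finite
product of matrix algebras `M_{n i}(F)` with the `*`-transpose involution. -/
def IsStandardMatricialStarAlgebra (F : Type*) [Field F] [StarRing F]
    (A : Type*) [Ring A] [Algebra F A] [StarRing A] [StarModule F A] : Prop :=
  ∃ (k : ℕ) (n : Fin (k + 1) → ℕ), (∀ i, 0 < n i) ∧
    Nonempty (A ≃⋆ₐ[F] ((i : Fin (k + 1)) → Matrix (Fin (n i)) (Fin (n i)) F))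

/-- A map `M_a(F) → M_b(F)` is standard (up to a permutation of the index set) if it is
`z ↦ diag(z, …, z)` (multiplicity `t`), suitably reindexed. -/
def IsStandardMatrixMap (F : Type*) [Field F] {a b : ℕ}
    (Φ : Matrix (Fin a) (Fin a) F → Matrix (Fin b) (Fin b) F) : Prop :=
  ∃ (t : ℕ) (E : Fin a × Fin t ≃ Fin b),
    ∀ z, Φ z = Matrix.reindex E E (Matrix.blockDiagonal fun _ : Fin t => z)

/-- A map between finite products of matrix algebras over `F` is standard (block diagonal,
up to a permutation of the index sets): it is determined by multiplicities `t j i`, the `j`-th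
component being the block-diagonal sum of `t j i` copies of the `i`-th component of the input. -/
def IsStandardBlockMap (F : Type*) [Field F] {k l : ℕ} (n : Fin (k + 1) → ℕ)
    (m : Fin (l + 1) → ℕ)
    (Φ : ((i : Fin (k + 1)) → Matrix (Fin (n i)) (Fin (n i)) F) →
      ((j : Fin (l + 1)) → Matrix (Fin (m j)) (Fin (m j)) F)) : Prop :=
  ∃ t : Fin (l + 1) → Fin (k + 1) → ℕ,
    ∃ E : (j : Fin (l + 1)) →
      ((Σ c : (Σ i : Fin (k + 1), Fin (t j i)), Fin (n c.1)) ≃ Fin (m j)),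
      ∀ z j, Φ z j =
        Matrix.reindex (E j) (E j)
          (Matrix.blockDiagonal' fun c : (Σ i : Fin (k + 1), Fin (t j i)) => z c.1)

end AraClaramunt
namespace AraClaramunt

/-- `Q`, with rank function `N`, is (a copy of) the `*`-algebra `M_F`: the completion of the
standard direct limit `lim_n M_{2^n}(F)` (block-diagonal standard `*`-embeddings) with respect
to its unique rank function, with the involution induced by the `*`-transpose involutions. -/
def IsMFStarCompletion (F : Type*) [Field F] [StarRing F]
    (Q : Type*) [Ring Q] [Algebra F Q] [StarRing Q] [StarModule F Q] (N : Q → ℝ) : Prop :=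
  IsRankFunction N ∧ (∀ x : Q, N (star x) = N x) ∧ RankComplete N ∧
    ∃ A : ℕ → StarSubalgebra F Q,
      ∃ hA : ∀ n, A n ≤ A (n + 1),
        ∃ γ : (n : ℕ) → ((A n) ≃⋆ₐ[F] Matrix (Fin (2 ^ n)) (Fin (2 ^ n)) F),
          RankDense N (⋃ n, (A n : Set Q)) ∧
            ∀ n, IsStandardMatrixMap F
              (fun z => γ (n + 1) (StarSubalgebra.inclusion (hA n) ((γ n).symm z)))

/-- A standard ultramatricial `*`-algebra: an increasing union of `*`-subalgebras,
`*`-isomorphic to standard matricial `*`-algebras, with standard (block diagonal)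
connecting maps. -/
def IsStandardUltramatricialStarAlgebra (F : Type*) [Field F] [StarRing F]
    (B : Type*) [Ring B] [Algebra F B] [StarRing B] [StarModule F B] : Prop :=
  ∃ C : ℕ → StarSubalgebra F B,
    ∃ hC : ∀ n, C n ≤ C (n + 1),
      (∀ b : B, ∃ n, b ∈ C n) ∧
        ∃ (k : ℕ → ℕ) (m : (n : ℕ) → Fin (k n + 1) → ℕ),
          (∀ n i, 0 < m n i) ∧
            ∃ γ : (n : ℕ) →
              ((C n) ≃⋆ₐ[F] ((i : Fin (k n + 1)) → Matrix (Fin (m n i)) (Fin (m n i)) F)),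
              ∀ n, IsStandardBlockMap F (m n) (m (n + 1))
                (fun z => γ (n + 1) (StarSubalgebra.inclusion (hC n) ((γ n).symm z)))

/-- An ultramatricial `*`-algebra: an increasing union of `*`-subalgebras which are
`*`-isomorphic to standard matricial `*`-algebras. -/
def IsUltramatricialStarAlgebra (F : Type*) [Field F] [StarRing F]
    (B : Type*) [Ring B] [Algebra F B] [StarRing B] [StarModule F B] : Prop :=
  ∃ C : ℕ → StarSubalgebra F B, (∀ n, C n ≤ C (n + 1)) ∧
    (∀ n, IsStandardMatricialStarAlgebra F (C n)) ∧ (∀ b : B, ∃ n, b ∈ C n)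

/-- `p` is `*`-equivalent (in `A`) to a standard projection of `A`, i.e. to a projection all of
whose components under some `*`-isomorphism of `A` with a standard matricial `*`-algebra are
diagonal matrices. -/
def IsQuasiStandardProjection (F : Type*) [Field F] [StarRing F]
    (A : Type*) [Ring A] [Algebra F A] [StarRing A] [StarModule F A] (p : A) : Prop :=
  ∃ (k : ℕ) (n : Fin (k + 1) → ℕ), (∀ i, 0 < n i) ∧
    ∃ (γ : A ≃⋆ₐ[F] ((i : Fin (k + 1)) → Matrix (Fin (n i)) (Fin (n i)) F)) (e : A),
      IsProjection e ∧ (∀ i, (γ e i).IsDiag) ∧ StarEquivProj p e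

/-- Hereditarily quasi-standard projection (Definition 4.4 of the paper). -/
def IsHereditarilyQuasiStandard (F : Type*) [Field F] [StarRing F]
    {R : Type*} [Ring R] [Algebra F R] [StarRing R] [StarModule F R]
    (N : R → ℝ) (A : StarSubalgebra F R) (p : R) : Prop :=
  ∃ hp : p ∈ A,
    IsQuasiStandardProjection F A ⟨p, hp⟩ ∧
      ∀ p' : R, p' ∈ A → IsProjection p' → ProjLE p' p → ∀ ε : ℝ, 0 < ε →
        ∃ A' : StarSubalgebra F R, A ≤ A' ∧ IsStandardMatricialStarAlgebra F A' ∧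
          ∃ p'' : R, ∃ hp'' : p'' ∈ A', IsProjection p'' ∧ ProjLE p'' p' ∧
            N (p' - p'') < ε ∧ IsQuasiStandardProjection F A' ⟨p'', hp''⟩

end AraClaramunt
namespace AraClaramunt

/-- Witness that `Q` (with rank function `NQ`) is `*`-isomorphic to the completion of an
ultramatricial `*`-algebra `B` with respect to the metric induced by an extremal pseudo-rank
function `NB` on `B`. -/
structure UltramatricialStarCompletionData (F : Type) [Field F] [StarRing F]
    (Q : Type) [Ring Q] [Algebra F Q] [StarRing Q] [StarModule F Q]
    (NQ : Q → ℝ) : Type 1 where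
  B : Type
  [ringB : Ring B]
  [algB : Algebra F B]
  [starB : StarRing B]
  [starModB : StarModule F B]
  NB : B → ℝ
  pseudoRank : IsPseudoRankFunction NB
  extremal : IsExtremalPseudoRankFunction NB
  ultramatricial : IsUltramatricialStarAlgebra F B
  φ : B →⋆ₐ[F] Q
  rank_eq : ∀ b : B, NQ (φ b) = NB b
  dense : RankDense NQ (Set.range φ)
  complete : RankComplete NQ

/-! ### Basic facts on pseudo-rank functions -/

section Basic
variable {Q : Type*} [Ring Q] {N : Q → ℝ}

theorem IsPseudoRankFunction.zero (h : IsPseudoRankFunction N) : N 0 = 0 := by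
  have := h.add_of_orthogonal 0 0 (by simp [IsIdempotentElem]) (by simp [IsIdempotentElem])
    (by simp) (by simp)
  simp at this
  exact this

theorem IsPseudoRankFunction.neg (h : IsPseudoRankFunction N) (x : Q) : N (-x) = N x := by
  apply le_antisymm
  · have := h.mul_le_right (-1) x
    simpa using this
  · have := h.mul_le_right (-1) (-x)
    simpa using this

theorem IsPseudoRankFunction.sub_le (h : IsPseudoRankFunction N) (x y : Q) :
    N (x - y) ≤ N x + N y := by
  rw [sub_eq_add_neg, ← h.neg y]
  exact h.subadditive _ _

theorem IsPseudoRankFunction.sub_comm (h : IsPseudoRankFunction N) (x y : Q) :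
    N (x - y) = N (y - x) := by
  rw [← h.neg, neg_sub]

theorem IsPseudoRankFunction.dist_triangle (h : IsPseudoRankFunction N) (x y z : Q) :
    N (x - z) ≤ N (x - y) + N (y - z) := by
  have := h.subadditive (x - y) (y - z)
  simpa using this

theorem IsPseudoRankFunction.sum_le (h : IsPseudoRankFunction N) {ι : Type*} (s : Finset ι)
    (f : ι → Q) : N (∑ i ∈ s, f i) ≤ ∑ i ∈ s, N (f i) := by
  classical
  induction s using Finset.induction_on with
  | empty => simp [h.zero]
  | insert a s ha ih =>
    rw [Finset.sum_insert ha, Finset.sum_insert ha]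
    exact (h.subadditive _ _).trans (by linarith)

theorem IsPseudoRankFunction.smul_le {F : Type*} [Field F] [Algebra F Q]
    (h : IsPseudoRankFunction N) (c : F) (x : Q) : N (c • x) ≤ N x := by
  rw [Algebra.smul_def]
  exact h.mul_le_right _ _

theorem IsPseudoRankFunction.mul_mul_le (h : IsPseudoRankFunction N) (a b c : Q) :
    N (a * b * c) ≤ N b :=
  (h.mul_le_left _ _).trans (h.mul_le_right _ _)

theorem IsPseudoRankFunction.comp {R : Type*} [Ring R] (h : IsPseudoRankFunction N)
    (f : R →+* Q) : IsPseudoRankFunction (fun x => N (f x)) where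
  nonneg x := h.nonneg _
  le_one x := h.le_one _
  map_one := by simp [h.map_one]
  subadditive a b := by simpa using h.subadditive (f a) (f b)
  mul_le_left a b := by simpa using h.mul_le_left (f a) (f b)
  mul_le_right a b := by simpa using h.mul_le_right (f a) (f b)
  add_of_orthogonal a b ha hb hab hba := by
    have := h.add_of_orthogonal (f a) (f b) (ha.map f) (hb.map f)
      (by rw [← map_mul, hab, map_zero]) (by rw [← map_mul, hba, map_zero])
    simpa using this

end Basic

/-! ### Star-regular self-injective rings -/

/-- Partial isometries. -/
def PIso {Q : Type*} [Mul Q] [Star Q] (v : Q) : Prop := v * star v * v = v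

/-- Standing assumptions: `*`-regular, self-injective, with a rank function. -/
structure Ctx (Q : Type) [Ring Q] [StarRing Q] (N : Q → ℝ) : Prop where
  inj : Module.Injective Q Q
  reg : VNRegular Q
  proper : ProperStar Q
  rank : IsRankFunction N

section Star
variable {Q : Type} [Ring Q] [StarRing Q] {N : Q → ℝ}

theorem extend_left (hI : Module.Injective Q Q) {M : Type} [AddCommGroup M] [Module Q M]
    (P G : M →ₗ[Q] Q) (h : ∀ m, P m = 0 → G m = 0) : ∃ x : Q, ∀ m, G m = P m * x := by
  have hk : LinearMap.ker P ≤ LinearMap.ker G := fun m hm => h m hm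
  let P' : (M ⧸ LinearMap.ker P) →ₗ[Q] Q := (LinearMap.ker P).liftQ P le_rfl
  let G' : (M ⧸ LinearMap.ker P) →ₗ[Q] Q := (LinearMap.ker P).liftQ G hk
  have hP' : Function.Injective P' := by
    rw [← LinearMap.ker_eq_bot]
    exact Submodule.ker_liftQ_eq_bot _ _ _ le_rfl
  obtain ⟨H, hH⟩ := hI.out P' hP' G'
  refine ⟨H 1, fun m => ?_⟩
  have := hH (Submodule.Quotient.mk m)
  simp only [P', G', Submodule.liftQ_apply] at this
  rw [← this, ← smul_eq_mul, ← map_smul, smul_eq_mul, mul_one]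

theorem extend_right (hI : Module.Injective Q Q) {ι : Type} (p x : ι → Q)
    (h : ∀ s : Finset ι, ∃ w, ∀ i ∈ s, w * p i = x i) : ∃ w, ∀ i, w * p i = x i := by
  obtain ⟨y, hy⟩ := extend_left hI (Finsupp.linearCombination Q (fun i => star (p i)))
    (Finsupp.linearCombination Q (fun i => star (x i))) (by
      intro m hm
      obtain ⟨w, hw⟩ := h m.support
      rw [Finsupp.linearCombination_apply, Finsupp.sum] at hm ⊢
      have : ∑ i ∈ m.support, m i • star (x i) = (∑ i ∈ m.support, m i • star (p i)) * star w := by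
        rw [Finset.sum_mul]
        refine Finset.sum_congr rfl fun i hi => ?_
        rw [← hw i hi]
        simp [mul_assoc]
      rw [this, hm, zero_mul])
  refine ⟨star y, fun i => ?_⟩
  have := hy (Finsupp.single i 1)
  simp at this
  have := congrArg star this
  simpa using this.symm

theorem ProperStar.right (hP : ProperStar Q) {x : Q} (h : x * star x = 0) : x = 0 := by
  have := hP (star x) (by simpa using h)
  simpa using this

/-- Supremum of the left projections of the elements of a set. -/
theorem exists_sup (hI : Module.Injective Q Q) (hP : ProperStar Q) (S : Set Q) :
    ∃ e : Q, IsProjection e ∧ (∀ s ∈ S, e * s = s) ∧ ∀ z, (∀ s ∈ S, z * s = 0) → z * e = 0 := by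
  let I : Submodule Q Q := Submodule.span Q (star '' S)
  let K : Submodule Q Q :=
    { carrier := {z | ∀ s ∈ S, z * s = 0}
      add_mem' := by
        intro a b ha hb s hs
        rw [add_mul, ha s hs, hb s hs, add_zero]
      zero_mem' := by simp
      smul_mem' := by
        intro c a ha s hs
        rw [smul_eq_mul, mul_assoc, ha s hs, mul_zero] }
  have hIK : ∀ i ∈ I, ∀ k ∈ K, k * star i = 0 := by
    intro i hi k hk
    induction hi using Submodule.span_induction with
    | mem x hx =>
      obtain ⟨s, hs, rfl⟩ := hx
      simpa using hk s hs
    | zero => simp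
    | add x y _ _ hx hy => rw [star_add, mul_add, hx, hy, add_zero]
    | smul c x _ hx => rw [smul_eq_mul, star_mul, ← mul_assoc, hx, zero_mul]
  obtain ⟨x, hx⟩ := extend_left hI (M := I × K) (I.subtype.coprod K.subtype)
    (I.subtype.coprod 0) (by
      rintro ⟨⟨i, hi⟩, ⟨k, hk⟩⟩ hm
      simp at hm ⊢
      apply hP.right
      have : i = -k := eq_neg_of_add_eq_zero_left hm
      nth_rewrite 1 [this]
      rw [neg_mul, hIK i hi k hk, neg_zero])
  have h1 : ∀ s ∈ S, star s * x = star s := by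
    intro s hs
    have := hx (⟨star s, Submodule.subset_span ⟨s, hs, rfl⟩⟩, 0)
    simp at this
    exact this.symm
  have h2 : ∀ k, (∀ s ∈ S, k * s = 0) → k * x = 0 := by
    intro k hk
    have := hx (0, ⟨k, hk⟩)
    simp at this
    exact this.symm
  have h1' : ∀ s ∈ S, star x * s = s := by
    intro s hs
    have := congrArg star (h1 s hs)
    simpa using this
  have h3 : (star x - 1) * x = 0 := h2 _ (by
    intro s hs
    rw [sub_mul, h1' s hs, one_mul, sub_self])
  have h4 : star x * x = x := by
    rw [sub_mul, one_mul, sub_eq_zero] at h3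
    exact h3
  have h5 : star x = x := by
    have := congrArg star h4
    simp at this
    rw [← this, h4]
  refine ⟨x, ⟨h5, ?_⟩, ?_, h2⟩
  · rw [h5] at h4; exact h4
  · rw [h5] at h1'; exact h1'

theorem IsProjection.sa {p : Q} (h : IsProjection p) : star p = p := h.1
theorem IsProjection.idem {p : Q} (h : IsProjection p) : p * p = p := h.2

theorem IsProjection.compl {p : Q} (h : IsProjection p) : IsProjection (1 - p) := by
  constructor
  · simp [h.sa]
  · simp [mul_sub, sub_mul, h.idem]

theorem IsProjection.comm_of_le {p q : Q} (hp : IsProjection p) (hq : IsProjection q)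
    (h : p * q = q) : q * p = q := by
  have := congrArg star h
  simpa [hp.sa, hq.sa] using this

theorem IsProjection.comm_of_orth {p q : Q} (hp : IsProjection p) (hq : IsProjection q)
    (h : p * q = 0) : q * p = 0 := by
  have := congrArg star h
  simpa [hp.sa, hq.sa] using this

theorem IsProjection.sub {p q : Q} (hp : IsProjection p) (hq : IsProjection q)
    (h : p * q = q) : IsProjection (p - q) := by
  have h' := hp.comm_of_le hq h
  constructor
  · simp [hp.sa, hq.sa]
  · simp [mul_sub, sub_mul, hp.idem, hq.idem, h, h']

theorem IsProjection.add {p q : Q} (hp : IsProjection p) (hq : IsProjection q)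
    (h : p * q = 0) : IsProjection (p + q) := by
  have h' := hp.comm_of_orth hq h
  constructor
  · simp [hp.sa, hq.sa]
  · simp [mul_add, add_mul, hp.idem, hq.idem, h, h']

theorem isProjection_one : IsProjection (1 : Q) := by simp [IsProjection]
theorem isProjection_zero : IsProjection (0 : Q) := by simp [IsProjection]

theorem rank_add_proj (hN : IsPseudoRankFunction N) {p q : Q} (hp : IsProjection p)
    (hq : IsProjection q) (h : p * q = 0) : N (p + q) = N p + N q :=
  hN.add_of_orthogonal p q hp.idem hq.idem h (hp.comm_of_orth hq h)

theorem rank_sub_proj (hN : IsPseudoRankFunction N) {p q : Q} (hp : IsProjection p)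
    (hq : IsProjection q) (h : p * q = q) : N (p - q) = N p - N q := by
  have := rank_add_proj hN (hp.sub hq h) hq (by rw [sub_mul, h, hq.idem, sub_self])
  rw [sub_add_cancel] at this
  linarith

theorem proj_le_of_sandwich (hP : ProperStar Q) {p q : Q} (hp : IsProjection p)
    (hq : IsProjection q) (h : p * q * p = p) : q * p = p := by
  have h1 : star ((1 - q) * p) * ((1 - q) * p) = 0 := by
    rw [star_mul, hq.compl.sa, hp.sa]
    have : p * (1 - q) * ((1 - q) * p) = p * ((1 - q) * (1 - q)) * p := by
      simp only [mul_assoc]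
    rw [this, hq.compl.idem, mul_sub, sub_mul, h, mul_one, hp.idem, sub_self]
  have h2 := hP _ h1
  rw [sub_mul, one_mul, sub_eq_zero] at h2
  exact h2.symm

/-! partial isometries -/

theorem PIso.star {v : Q} (h : PIso v) : PIso (star v) := by
  have := congrArg Star.star h
  simp only [star_mul, star_star] at this
  simp only [PIso, star_star, mul_assoc] at this ⊢
  exact this

theorem PIso.ini {v : Q} (h : PIso v) : IsProjection (Star.star v * v) := by
  refine ⟨by simp, ?_⟩
  unfold PIso at h
  rw [mul_assoc, ← mul_assoc v, h]

theorem PIso.fin {v : Q} (h : PIso v) : IsProjection (v * Star.star v) := by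
  refine ⟨by simp, ?_⟩
  unfold PIso at h
  rw [← mul_assoc, h]

theorem PIso.mul_ini {v : Q} (h : PIso v) : v * (Star.star v * v) = v := by
  rw [← mul_assoc]; exact h

theorem PIso.of_ini (hP : ProperStar Q) {v : Q} (h : IsProjection (Star.star v * v)) : PIso v := by
  have h2 := hP (v * (Star.star v * v) - v) (by
    have hs : Star.star (v * (Star.star v * v) - v) = (Star.star v * v - 1) * Star.star v := by
      simp [sub_mul, mul_assoc]
    have : v * (Star.star v * v) - v = v * (Star.star v * v - 1) := by simp [mul_sub]
    rw [hs, this]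
    have : (Star.star v * v - 1) * Star.star v * (v * (Star.star v * v - 1)) =
      (Star.star v * v - 1) * ((Star.star v * v) * (Star.star v * v - 1)) := by
      simp only [mul_assoc]
    rw [this, mul_sub, h.idem]
    simp)
  rw [sub_eq_zero, ← mul_assoc] at h2
  exact h2

theorem rank_piso (hN : IsPseudoRankFunction N) {v : Q} (h : PIso v) :
    N (star v * v) = N (v * star v) ∧ N (star v * v) = N v := by
  have h1 : N v ≤ N (star v * v) := by
    have := hN.mul_le_right v (star v * v)
    rwa [h.mul_ini] at this
  have h2 : N v ≤ N (v * star v) := by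
    have := hN.mul_le_left (v * star v) v
    rwa [h] at this
  have h3 := hN.mul_le_left v (star v)
  have h4 := hN.mul_le_right (star v) v
  constructor <;> linarith

/-- Adding orthogonal partial isometries. -/
theorem PIso.add {v w : Q} (hv : PIso v) (hw : PIso w) (h1 : Star.star v * w = 0)
    (h2 : v * Star.star w = 0) : PIso (v + w) := by
  have h1' : Star.star w * v = 0 := by
    have := congrArg Star.star h1; simpa using this
  have h2' : w * Star.star v = 0 := by
    have := congrArg Star.star h2; simpa using this
  unfold PIso at *
  simp only [star_add, mul_add, add_mul, h2, h2', hv, hw, zero_mul, add_zero, zero_add]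
  rw [mul_assoc v, h1, mul_assoc w, h1']
  simp

theorem star_mul_add {v w : Q} (h1 : star v * w = 0) :
    star (v + w) * (v + w) = star v * v + star w * w := by
  have h1' : star w * v = 0 := by
    have := congrArg Star.star h1; simpa using this
  simp [mul_add, add_mul, h1, h1']

theorem mul_star_add {v w : Q} (h2 : v * star w = 0) :
    (v + w) * star (v + w) = v * star v + w * star w := by
  have h2' : w * star v = 0 := by
    have := congrArg Star.star h2; simpa using this
  simp [mul_add, add_mul, h2, h2']

/-- Left projections. -/
theorem Ctx.exists_lp (C : Ctx Q N) (x : Q) :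
    ∃ e, IsProjection e ∧ e * x = x ∧ (∃ y, e = x * y) ∧ N e = N x := by
  obtain ⟨e, he, h1, h2⟩ := exists_sup C.inj C.proper {x}
  obtain ⟨y, hy⟩ := C.reg x
  have h1 := h1 x rfl
  have h3 : (1 - x * y) * e = 0 := h2 _ (by
    intro s hs
    rw [Set.mem_singleton_iff] at hs
    subst hs
    rw [sub_mul, one_mul, ← hy, sub_self])
  have h4 : e = x * (y * e) := by
    rw [sub_mul, one_mul, sub_eq_zero] at h3
    rw [← mul_assoc]; exact h3
  refine ⟨e, he, h1, ⟨_, h4⟩, le_antisymm ?_ ?_⟩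
  · rw [h4]; exact C.rank.1.mul_le_left _ _
  · nth_rewrite 1 [← h1]; exact C.rank.1.mul_le_left _ _

theorem Ctx.rank_star (C : Ctx Q N) (x : Q) : N (star x) = N x := by
  obtain ⟨e, he, h1, ⟨y, hy⟩, h2⟩ := C.exists_lp x
  have h1' : star x * e = star x := by
    have := congrArg star h1; simpa [he.sa] using this
  have hy' : e = star y * star x := by
    rw [← star_mul, ← hy, he.sa]
  rw [← h2]
  apply le_antisymm
  · rw [← h1']; exact C.rank.1.mul_le_right _ _
  · rw [hy']; exact C.rank.1.mul_le_right _ _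

/-- Right projections. -/
theorem Ctx.exists_rp (C : Ctx Q N) (x : Q) :
    ∃ e, IsProjection e ∧ x * e = x ∧ (∃ y, e = y * x) ∧ N e = N x := by
  obtain ⟨e, he, h1, ⟨y, hy⟩, h2⟩ := C.exists_lp (star x)
  refine ⟨e, he, ?_, ⟨star y, ?_⟩, ?_⟩
  · have := congrArg star h1; simpa [he.sa] using this
  · have := congrArg star hy; simpa [he.sa] using this
  · rw [h2, C.rank_star]

/-- Cut down a projection to the kernel of `t`. -/
theorem Ctx.cut (C : Ctx Q N) {g : Q} (hg : IsProjection g) (t : Q) :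
    ∃ g', IsProjection g' ∧ g * g' = g' ∧ t * g' = 0 ∧ N (g - g') ≤ N (t * g) := by
  obtain ⟨r, hr, h1, ⟨y, hy⟩, h2⟩ := C.exists_rp (t * g)
  have h3 : r * g = r := by
    rw [hy]; simp only [mul_assoc, hg.idem]
  have h4 : g * r = r := by
    have := congrArg star h3; simpa [hg.sa, hr.sa] using this
  refine ⟨g - r, hg.sub hr h4, ?_, ?_, ?_⟩
  · rw [mul_sub, hg.idem, h4]
  · rw [mul_sub]
    have : t * r = t * g * r := by rw [mul_assoc, h4]
    rw [this, h1, sub_self]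
  · rw [sub_sub_cancel, h2]

/-- Supremum of a chain of partial isometries. -/
theorem chain_sup (hI : Module.Injective Q Q) (hP : ProperStar Q) (S : Set Q)
    (hS : ∀ v ∈ S, PIso v)
    (hc : ∀ v ∈ S, ∀ w ∈ S, w * (star v * v) = v ∨ v * (star w * w) = w) :
    ∃ V, PIso V ∧ (∀ v ∈ S, V * (star v * v) = v) ∧
      (∀ v ∈ S, (star V * V) * (star v * v) = star v * v) ∧
      (∀ z, (∀ v ∈ S, z * v = 0) → z * V = 0) ∧
      (∀ z, (∀ v ∈ S, v * z = 0) → V * z = 0) := by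
  classical
  -- transitivity
  have htr : ∀ u v w : Q, PIso u → PIso v → PIso w → w * (star v * v) = v →
      v * (star u * u) = u → w * (star u * u) = u := by
    intro u v w hu hv hw h1 h2
    have h3 : (star u * u) * (star v * v) * (star u * u) = star u * u := by
      have : star u = star u * u * star v := by
        have := congrArg star h2; simpa [mul_assoc] using this.symm
      calc (star u * u) * (star v * v) * (star u * u)
          = (star u * u * star v) * (v * (star u * u)) := by simp only [mul_assoc]
        _ = star u * u := by rw [← this, h2]
    have h4 := proj_le_of_sandwich hP hu.ini hv.ini h3
    calc w * (star u * u) = w * ((star v * v) * (star u * u)) := by rw [h4]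
      _ = u := by rw [← mul_assoc, h1, h2]
  have hfin : ∀ s : Finset S, ∃ w, PIso w ∧ ∀ i ∈ s, w * (star (i : Q) * i) = i := by
    intro s
    by_cases hne : s.Nonempty
    · have : ∃ w ∈ S, ∀ i ∈ s, w * (star (i : Q) * i) = i := by
        induction hne using Finset.Nonempty.cons_induction with
        | singleton a => exact ⟨a, a.2, by simp [(hS a a.2).mul_ini]⟩
        | cons a s ha hs ih =>
          obtain ⟨w, hw, h⟩ := ih
          rcases hc a a.2 w hw with h1 | h1
          · refine ⟨w, hw, ?_⟩
            intro i hi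
            rw [Finset.mem_cons] at hi
            rcases hi with rfl | hi
            · exact h1
            · exact h i hi
          · refine ⟨a, a.2, ?_⟩
            intro i hi
            rw [Finset.mem_cons] at hi
            rcases hi with rfl | hi
            · exact (hS i i.2).mul_ini
            · exact htr _ _ _ (hS i i.2) (hS w hw) (hS a a.2) h1 (h i hi)
      obtain ⟨w, hw, h⟩ := this
      exact ⟨w, hS w hw, h⟩
    · rw [Finset.not_nonempty_iff_eq_empty] at hne
      subst hne
      exact ⟨0, by simp [PIso], by simp⟩
  obtain ⟨x, hx⟩ := extend_right hI (ι := S) (fun i => star (i : Q) * i) (fun i => (i : Q))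
    (fun s => by obtain ⟨w, _, h⟩ := hfin s; exact ⟨w, h⟩)
  obtain ⟨f, hf, hf1, hf2⟩ := exists_sup hI hP ((fun v => star v * v) '' S)
  have hf1' : ∀ v ∈ S, f * (star v * v) = star v * v := fun v hv => hf1 _ ⟨v, hv, rfl⟩
  have hf2' : ∀ z, (∀ v ∈ S, z * (star v * v) = 0) → z * f = 0 := by
    intro z hz
    apply hf2
    rintro _ ⟨v, hv, rfl⟩
    exact hz v hv
  have hx' : ∀ v ∈ S, x * (star v * v) = v := fun v hv => hx ⟨v, hv⟩
  have hV1 : ∀ v ∈ S, (x * f) * (star v * v) = v := by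
    intro v hv; rw [mul_assoc, hf1' v hv, hx' v hv]
  have hvw : ∀ v ∈ S, ∀ w ∈ S, star v * w = star v * v * (star w * w) := by
    intro v hv w hw
    rcases hc v hv w hw with h | h
    · have : star v = star v * v * star w := by
        have := congrArg star h; simpa [mul_assoc] using this.symm
      nth_rewrite 1 [this]
      simp only [mul_assoc]
    · nth_rewrite 1 [← h]
      simp only [mul_assoc]
  have hvV : ∀ v ∈ S, star v * (x * f) = star v * v := by
    intro v hv
    have h1 : (star v * x - star v * v) * f = 0 := hf2' _ (by
      intro w hw
      rw [sub_mul, mul_assoc, hx' w hw, hvw v hv w hw, sub_self])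
    have h2 : star v * v * f = star v * v := by
      have := congrArg star (hf1' v hv); simpa [hf.sa, mul_assoc] using this
    rw [sub_mul, sub_eq_zero, h2] at h1
    rw [← mul_assoc, h1]
  have hVV : star (x * f) * (x * f) = f := by
    have h1 : (star (x * f) * (x * f) - 1) * f = 0 := hf2' _ (by
      intro v hv
      rw [sub_mul, one_mul, mul_assoc, hV1 v hv, sub_eq_zero]
      have := congrArg star (hvV v hv); simpa [hf.sa, mul_assoc] using this)
    rw [sub_mul, one_mul, sub_eq_zero] at h1
    rw [mul_assoc, mul_assoc, hf.idem] at h1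
    exact h1
  refine ⟨x * f, PIso.of_ini hP (by rw [hVV]; exact hf), hV1, ?_, ?_, ?_⟩
  · intro v hv; rw [hVV, hf1' v hv]
  · intro z hz
    rw [← mul_assoc]
    apply hf2'
    intro v hv
    rw [mul_assoc, hx' v hv, hz v hv]
  · intro z hz
    have h1 : star z * f = 0 := hf2' _ (by
      intro v hv
      have : star (v * z) = 0 := by rw [hz v hv, star_zero]
      rw [star_mul] at this
      rw [← mul_assoc, this, zero_mul])
    have h2 : f * z = 0 := by
      have := congrArg star h1; simpa [hf.sa] using this
    rw [mul_assoc, h2, mul_zero]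

/-- Maximal partial isometries in suitable classes. -/
theorem exists_maximal_piso (hI : Module.Injective Q Q) (hP : ProperStar Q) (T : Set Q)
    (hT : ∀ v ∈ T, PIso v)
    (hT2 : ∀ S ⊆ T, ∀ V, (∀ z, (∀ v ∈ S, z * v = 0) → z * V = 0) →
      (∀ z, (∀ v ∈ S, v * z = 0) → V * z = 0) → PIso V →
      (∀ v ∈ S, ∀ w ∈ S, w * (star v * v) = v ∨ v * (star w * w) = w) → V ∈ T) :
    ∃ m ∈ T, ∀ a ∈ T, a * (star m * m) = m → a = m := by
  have key := exists_maximal_of_chains_bounded (α := T)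
    (r := fun v w => (w : Q) * (star (v : Q) * v) = v ∧
      (star (w : Q) * w) * (star (v : Q) * v) = star (v : Q) * v) (by
      intro c hc
      have hc' : ∀ v ∈ (Subtype.val '' c), ∀ w ∈ (Subtype.val '' c),
          w * (star v * v) = v ∨ v * (star w * w) = w := by
        rintro _ ⟨v, hv, rfl⟩ _ ⟨w, hw, rfl⟩
        by_cases hvw : v = w
        · subst hvw; left; exact (hT v v.2).mul_ini
        · rcases hc hv hw hvw with h | h
          · left; exact h.1
          · right; exact h.1
      obtain ⟨V, h1, h2, h3, h4, h5⟩ := chain_sup hI hP (Subtype.val '' c)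
        (by rintro _ ⟨v, hv, rfl⟩; exact hT v v.2) hc'
      refine ⟨⟨V, hT2 (Subtype.val '' c) (by rintro _ ⟨v, hv, rfl⟩; exact v.2) V h4 h5 h1 hc'⟩, ?_⟩
      intro a ha
      exact ⟨h2 _ ⟨a, ha, rfl⟩, h3 _ ⟨a, ha, rfl⟩⟩) (by
      rintro ⟨a, ha⟩ ⟨b, hb⟩ ⟨c, hc⟩ ⟨h1, h1'⟩ ⟨h2, h2'⟩
      simp only at *
      constructor
      · calc c * (star a * a) = c * ((star b * b) * (star a * a)) := by rw [h1']
          _ = a := by rw [← mul_assoc, h2, h1]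
      · calc star c * c * (star a * a) = star c * c * ((star b * b) * (star a * a)) := by rw [h1']
          _ = star a * a := by rw [← mul_assoc, h2', h1'])
  obtain ⟨⟨m, hm⟩, hmax⟩ := key
  refine ⟨m, hm, fun a ha h => ?_⟩
  have h3 : (star m * m) * (star a * a) * (star m * m) = star m * m := by
    have : star m = star m * m * star a := by
      have := congrArg star h; simpa [mul_assoc] using this.symm
    calc (star m * m) * (star a * a) * (star m * m)
        = (star m * m * star a) * (a * (star m * m)) := by simp only [mul_assoc]
      _ = star m * m := by rw [← this, h]
  have h4 := proj_le_of_sandwich hP (hT m hm).ini (hT a ha).ini h3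
  obtain ⟨h5, h6⟩ := hmax ⟨a, ha⟩ ⟨h, h4⟩
  simp only at h5 h6
  have h7 : (star a * a) * (star m * m) = star a * a := by
    have := congrArg star h6; simpa [mul_assoc] using this
  calc a = a * (star a * a) := (hT a ha).mul_ini.symm
    _ = a * ((star a * a) * (star m * m)) := by rw [h7]
    _ = m := by rw [← mul_assoc, (hT a ha).mul_ini, h]

end Star

/-- Further assumptions: nonzero projections are linked by nonzero partial isometries, and there are
no minimal projections. -/
structure Ctx2 (Q : Type) [Ring Q] [StarRing Q] (N : Q → ℝ) : Prop extends Ctx Q N where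
  hit : ∀ e f : Q, IsProjection e → IsProjection f → e ≠ 0 → f ≠ 0 →
    ∃ v, v ≠ 0 ∧ PIso v ∧ e * v = v ∧ v * f = v
  nomin : ∀ p : Q, IsProjection p → p ≠ 0 → ∃ q, IsProjection q ∧ p * q = q ∧ q ≠ 0 ∧ q ≠ p

theorem exists_seq_rel {α : Type*} (P : ℕ → α → Prop) (r : ℕ → α → α → Prop)
    (h0 : ∃ a, P 0 a) (hs : ∀ n a, P n a → ∃ b, P (n + 1) b ∧ r n a b) :
    ∃ f : ℕ → α, (∀ n, P n (f n)) ∧ ∀ n, r n (f n) (f (n + 1)) := by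
  choose! g hg1 hg2 using hs
  obtain ⟨a, ha⟩ := h0
  have hP : ∀ n, P n (Nat.rec a (fun n x => g n x) n) := by
    intro n
    induction n with
    | zero => exact ha
    | succ n ih => exact hg1 n _ ih
  exact ⟨fun n => Nat.rec a (fun n x => g n x) n, hP, fun n => hg2 n _ (hP n)⟩

section Star2
variable {Q : Type} [Ring Q] [StarRing Q] {N : Q → ℝ}

theorem ini_le (hP : ProperStar Q) {u v : Q} (hu : PIso u) (hv : PIso v)
    (h : v * (star u * u) = u) : (star v * v) * (star u * u) = star u * u := by
  apply proj_le_of_sandwich hP hu.ini hv.ini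
  have : star u = star u * u * star v := by
    have := congrArg star h; simpa [mul_assoc] using this.symm
  calc (star u * u) * (star v * v) * (star u * u)
      = (star u * u * star v) * (v * (star u * u)) := by simp only [mul_assoc]
    _ = star u * u := by rw [← this, h]

/-- Comparability of projections. -/
theorem Ctx2.compar (C : Ctx2 Q N) {e f : Q} (he : IsProjection e) (hf : IsProjection f)
    (hN : N e ≤ N f) : ∃ v, PIso v ∧ star v * v = e ∧ f * v = v := by
  have hR := C.rank.1
  obtain ⟨m, ⟨hm, hfm, hme⟩, hmax⟩ := exists_maximal_piso C.inj C.proper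
    {v | PIso v ∧ f * v = v ∧ v * e = v} (fun v hv => hv.1) (by
      intro S hS V h1 h2 hV _
      refine ⟨hV, ?_, ?_⟩
      · have := h1 (1 - f) (by intro v hv; rw [sub_mul, one_mul, (hS hv).2.1, sub_self])
        rw [sub_mul, one_mul, sub_eq_zero] at this
        exact this.symm
      · have := h2 (1 - e) (by intro v hv; rw [mul_sub, mul_one, (hS hv).2.2, sub_self])
        rw [mul_sub, mul_one, sub_eq_zero] at this
        exact this.symm)
  have hem : e * (star m * m) = star m * m := by
    have : e * star m = star m := by
      have := congrArg star hme; simpa [he.sa] using this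
    rw [← mul_assoc, this]
  have hfm' : f * (m * star m) = m * star m := by rw [← mul_assoc, hfm]
  have he0 := he.sub hm.ini hem
  have hf0 := hf.sub hm.fin hfm'
  have hmsf : star m * f = star m := by
    have := congrArg star hfm; simpa [hf.sa] using this
  have hmss : star m * m * star m = star m := by
    have := hm.star; unfold PIso at this; simpa using this
  by_cases h1 : e - star m * m = 0
  · exact ⟨m, hm, (sub_eq_zero.1 h1).symm, hfm⟩
  by_cases h2 : f - m * star m = 0
  · refine absurd (C.rank.2 _ ?_) h1
    have h3 := rank_sub_proj hR he hm.ini hem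
    have h4 := (rank_piso hR hm).1
    have h5 : f = m * star m := sub_eq_zero.1 h2
    have h6 := hR.nonneg (e - star m * m)
    rw [h5] at hN
    linarith
  exfalso
  obtain ⟨v, hv0, hv, hv1, hv2⟩ := C.hit _ _ hf0 he0 h2 h1
  have a1 : star m * v = 0 := by
    rw [← hv1, ← mul_assoc, mul_sub, hmsf, ← mul_assoc, hmss, sub_self, zero_mul]
  have hv2' : (e - star m * m) * star v = star v := by
    have := congrArg star hv2; simpa [he.sa] using this
  have a2 : m * star v = 0 := by
    rw [← hv2', ← mul_assoc, mul_sub, hme, hm.mul_ini, sub_self, zero_mul]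
  have a3 : v * (star m * m) = 0 := by
    have := congrArg star a2
    simp at this
    rw [← mul_assoc, this, zero_mul]
  have := hmax (m + v) ⟨hm.add hv a1 a2, ?_, ?_⟩ ?_
  · exact hv0 (by simpa using this)
  · rw [mul_add, hfm]
    congr 1
    rw [← hv1, ← mul_assoc, mul_sub, hf.idem, hfm']
  · rw [add_mul, hme]
    congr 1
    rw [← hv2, mul_assoc, sub_mul, he.idem, mul_assoc, hme]
  · rw [add_mul, hm.mul_ini, a3, add_zero]

/-- Halving of projections. -/
theorem Ctx2.halve (C : Ctx2 Q N) {p : Q} (hp : IsProjection p) :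
    ∃ q, IsProjection q ∧ p * q = q ∧ N q = N p / 2 := by
  have hR := C.rank.1
  obtain ⟨m, ⟨hm, hpm, hmp, hmm⟩, hmax⟩ := exists_maximal_piso C.inj C.proper
    {v | PIso v ∧ p * v = v ∧ v * p = v ∧ v * v = 0} (fun v hv => hv.1) (by
      intro S hS V h1 h2 hV hc
      refine ⟨hV, ?_, ?_, ?_⟩
      · have := h1 (1 - p) (by intro v hv; rw [sub_mul, one_mul, (hS hv).2.1, sub_self])
        rw [sub_mul, one_mul, sub_eq_zero] at this
        exact this.symm
      · have := h2 (1 - p) (by intro v hv; rw [mul_sub, mul_one, (hS hv).2.2.1, sub_self])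
        rw [mul_sub, mul_one, sub_eq_zero] at this
        exact this.symm
      · apply h1
        intro w hw
        apply h2
        intro v hv
        rcases hc v hv w hw with h | h
        · have h3 := ini_le C.proper (hS hv).1 (hS hw).1 h
          have h3' : (star v * v) * (star w * w) = star v * v := by
            have := congrArg star h3; simpa [mul_assoc] using this
          calc v * w = v * (star v * v) * w := by rw [(hS hv).1.mul_ini]
            _ = v * ((star v * v) * (star w * w)) * w := by rw [h3']
            _ = v * (star v * v) * star w * (w * w) := by simp only [mul_assoc]
            _ = 0 := by rw [(hS hw).2.2.2, mul_zero]
        · rw [← h, ← mul_assoc, (hS hv).2.2.2, zero_mul])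
  have hpm1 : p * (star m * m) = star m * m := by
    have : p * star m = star m := by
      have := congrArg star hmp; simpa [hp.sa] using this
    rw [← mul_assoc, this]
  have hpm2 : p * (m * star m) = m * star m := by rw [← mul_assoc, hpm]
  have horth : (star m * m) * (m * star m) = 0 := by
    calc (star m * m) * (m * star m) = star m * (m * m) * star m := by simp only [mul_assoc]
      _ = 0 := by rw [hmm]; simp
  have hsum := hm.ini.add hm.fin horth
  have hpsum : p * (star m * m + m * star m) = star m * m + m * star m := by
    rw [mul_add, hpm1, hpm2]
  have hh := hp.sub hsum hpsum
  by_cases h0 : p - (star m * m + m * star m) = 0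
  · refine ⟨star m * m, hm.ini, hpm1, ?_⟩
    have h1 := rank_add_proj hR hm.ini hm.fin horth
    have h2 := (rank_piso hR hm).1
    rw [sub_eq_zero] at h0
    rw [h0]
    linarith
  exfalso
  set h := p - (star m * m + m * star m) with hdef
  obtain ⟨q, hq, hhq, hq0, hqh⟩ := C.nomin h hh h0
  have hq2 := hh.sub hq hhq
  obtain ⟨v, hv0, hv, hv1, hv2⟩ := C.hit q (h - q) hq hq2 hq0
    (fun h' => hqh (sub_eq_zero.1 h').symm)
  have hqh' := hh.comm_of_le hq hhq
  have hhv : h * v = v := by rw [← hv1, ← mul_assoc, hhq]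
  have hvh : v * h = v := by rw [← hv2, mul_assoc, sub_mul, hh.idem, hqh']
  have hmh : m * h = 0 := by
    rw [hdef, mul_sub, mul_add, hmp, hm.mul_ini, ← mul_assoc, hmm]; simp
  have hhm : h * m = 0 := by
    rw [hdef, sub_mul, add_mul, hpm, hm, mul_assoc, hmm]; simp
  have hph : p * h = h := by rw [hdef, mul_sub, hp.idem, hpsum]
  have hhp : h * p = h := hp.comm_of_le hh hph
  have hmsh : star m * h = 0 := by
    have := congrArg star hhm; simpa [hh.sa] using this
  have hhsm : h * star m = 0 := by
    have := congrArg star hmh; simpa [hh.sa] using this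
  have a1 : star m * v = 0 := by rw [← hhv, ← mul_assoc, hmsh, zero_mul]
  have hvs : h * star v = star v := by
    have := congrArg star hvh; simpa [hh.sa] using this
  have a2 : m * star v = 0 := by rw [← hvs, ← mul_assoc, hmh, zero_mul]
  have hvv : v * v = 0 := by
    calc v * v = (v * (h - q)) * (q * v) := by rw [hv1, hv2]
      _ = v * ((h - q) * q) * v := by simp only [mul_assoc]
      _ = 0 := by rw [sub_mul, hhq, hq.idem]; simp
  have := hmax (m + v) ⟨hm.add hv a1 a2, ?_, ?_, ?_⟩ ?_
  · exact hv0 (by simpa using this)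
  · rw [mul_add, hpm]
    congr 1
    rw [← hhv, ← mul_assoc, hph]
  · rw [add_mul, hmp]
    congr 1
    rw [← hvh, mul_assoc, hhp]
  · have b1 : m * v = 0 := by rw [← hhv, ← mul_assoc, hmh, zero_mul]
    have b2 : v * m = 0 := by rw [← hvh, mul_assoc, hhm, mul_zero]
    simp [mul_add, add_mul, hmm, hvv, b1, b2]
  · have : v * (star m * m) = 0 := by
      rw [← hvh, mul_assoc, ← mul_assoc h, hhsm]; simp
    rw [add_mul, hm.mul_ini, this, add_zero]

theorem Ctx2.halve_pow (C : Ctx2 Q N) {p : Q} (hp : IsProjection p) (k : ℕ) :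
    ∃ q, IsProjection q ∧ p * q = q ∧ N q = N p / 2 ^ k := by
  induction k with
  | zero => exact ⟨p, hp, hp.idem, by simp⟩
  | succ k ih =>
    obtain ⟨q, hq, h1, h2⟩ := ih
    obtain ⟨r, hr, h3, h4⟩ := C.halve hq
    refine ⟨r, hr, ?_, ?_⟩
    · rw [← h3, ← mul_assoc, h1]
    · rw [h4, h2, pow_succ]; field_simp

theorem Ctx2.small (C : Ctx2 Q N) {p : Q} (hp : IsProjection p) (h0 : p ≠ 0) {δ : ℝ}
    (hδ : 0 < δ) : ∃ q, IsProjection q ∧ p * q = q ∧ 0 < N q ∧ N q < δ := by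
  have hpos : 0 < N p := lt_of_le_of_ne (C.rank.1.nonneg p) (fun h => h0 (C.rank.2 p h.symm))
  obtain ⟨k, hk⟩ := pow_unbounded_of_one_lt (N p / δ) (one_lt_two (α := ℝ))
  obtain ⟨q, hq, h1, h2⟩ := C.halve_pow hp k
  refine ⟨q, hq, h1, by rw [h2]; positivity, ?_⟩
  rw [h2, div_lt_iff₀ (by positivity)]
  rw [div_lt_iff₀ hδ] at hk
  linarith

/-- Countable continuity of the rank function. -/
theorem Ctx2.sup_rank (C : Ctx2 Q N) (p : ℕ → Q) (hp : ∀ k, IsProjection (p k))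
    (hmono : ∀ k, p (k + 1) * p k = p k) (s : ℝ) (hs : ∀ k, N (p k) ≤ s) :
    ∃ g, IsProjection g ∧ (∀ k, g * p k = p k) ∧ N g ≤ s := by
  have hR := C.rank.1
  obtain ⟨P, hP, hP1, hP2⟩ := exists_sup C.inj C.proper (Set.range p)
  have hP1' : ∀ k, P * p k = p k := fun k => hP1 _ ⟨k, rfl⟩
  refine ⟨P, hP, hP1', ?_⟩
  by_contra hlt
  push Not at hlt
  have hs0 : 0 ≤ s := (hR.nonneg _).trans (hs 0)
  have hP0 : P ≠ 0 := by
    rintro rfl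
    rw [hR.zero] at hlt
    linarith
  obtain ⟨h, hh, hPh, hh0, hhs⟩ := C.small hP hP0 (δ := N P - s) (by linarith)
  have hg := hP.sub hh hPh
  have hNg := rank_sub_proj hR hP hh hPh
  set g := P - h with hgdef
  obtain ⟨u, hu1, hu2⟩ := exists_seq_rel
    (fun k u => PIso u ∧ star u * u = p k ∧ g * u = u) (fun k u u' => u' * p k = u)
    (C.compar (hp 0) hg (by linarith [hs 0])) (by
      rintro k u ⟨h1, h2, h3⟩
      have hgu : g * (u * star u) = u * star u := by rw [← mul_assoc, h3]
      have e1 := rank_sub_proj hR (hp (k + 1)) (hp k) (hmono k)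
      have e2 := rank_sub_proj hR hg h1.fin hgu
      have e3 := (rank_piso hR h1).1
      rw [h2] at e3
      obtain ⟨v, hv, hv1, hv2⟩ := C.compar ((hp (k + 1)).sub (hp k) (hmono k))
        (hg.sub h1.fin hgu) (by linarith [hs (k + 1)])
      have hup : u * p k = u := by rw [← h2, h1.mul_ini]
      have husg : star u * g = star u := by
        have := congrArg star h3; simpa [hg.sa] using this
      have huss : star u * u * star u = star u := by
        have := h1.star; unfold PIso at this; simpa using this
      have a1 : star u * v = 0 := by
        rw [← hv2, ← mul_assoc, mul_sub, husg, ← mul_assoc, huss, sub_self, zero_mul]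
      have hpk : p k * p (k + 1) = p k := (hp (k + 1)).comm_of_le (hp k) (hmono k)
      have hve : v * (p (k + 1) - p k) = v := by rw [← hv1, hv.mul_ini]
      have hve' : (p (k + 1) - p k) * star v = star v := by
        have := congrArg star hve; simpa [(hp k).sa, (hp (k + 1)).sa] using this
      have a2 : u * star v = 0 := by
        rw [← hve', ← mul_assoc, ← hup, mul_assoc u, mul_sub, hpk, (hp k).idem]; simp
      refine ⟨u + v, ⟨h1.add hv a1 a2, ?_, ?_⟩, ?_⟩
      · rw [star_mul_add a1, h2, hv1]; simp
      · rw [mul_add, h3]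
        congr 1
        rw [← hv2, ← mul_assoc, mul_sub, hg.idem, hgu]
      · rw [add_mul, hup, ← hve, mul_assoc, sub_mul, hmono k, (hp k).idem]; simp)
  have hle : ∀ j d, u (j + d) * p j = u j := by
    intro j d
    induction d with
    | zero =>
      have := (hu1 j).1.mul_ini
      rwa [(hu1 j).2.1] at this
    | succ d ih =>
      have hpp : ∀ d, p (j + d) * p j = p j := by
        intro d
        induction d with
        | zero => exact (hp j).idem
        | succ d ih => rw [← ih, ← mul_assoc, ← add_assoc, hmono]
      rw [← hpp d, ← mul_assoc, ← add_assoc, hu2, ih]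
  obtain ⟨V, hV, hV1, hV2, hV3, -⟩ := chain_sup C.inj C.proper (Set.range u)
    (by rintro _ ⟨k, rfl⟩; exact (hu1 k).1) (by
      rintro _ ⟨j, rfl⟩ _ ⟨k, rfl⟩
      rw [(hu1 j).2.1, (hu1 k).2.1]
      rcases le_total j k with h | h
      · left; obtain ⟨d, rfl⟩ := Nat.exists_eq_add_of_le h; exact hle _ _
      · right; obtain ⟨d, rfl⟩ := Nat.exists_eq_add_of_le h; exact hle _ _)
  have hgV : g * V = V := by
    have := hV3 (1 - g) (by
      rintro _ ⟨k, rfl⟩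
      rw [sub_mul, one_mul, (hu1 k).2.2, sub_self])
    rw [sub_mul, one_mul, sub_eq_zero] at this
    exact this.symm
  have hVP : (star V * V - 1) * P = 0 := hP2 _ (by
    rintro _ ⟨k, rfl⟩
    have := hV2 (u k) ⟨k, rfl⟩
    rw [(hu1 k).2.1] at this
    rw [sub_mul, one_mul, this, sub_self])
  rw [sub_mul, one_mul, sub_eq_zero] at hVP
  have b1 : N P ≤ N V := by
    rw [← hVP, mul_assoc]
    exact (hR.mul_le_right _ _).trans (hR.mul_le_left _ _)
  have b2 : N V ≤ N g := by
    rw [← hgV]; exact hR.mul_le_left _ _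
  linarith

theorem Ctx2.countable_sup (C : Ctx2 Q N) (t : ℕ → Q) (s : ℝ)
    (hs : ∀ K, ∑ k ∈ Finset.range K, N (t k) ≤ s) :
    ∃ g, IsProjection g ∧ (∀ k, g * t k = t k) ∧ N g ≤ s := by
  have hR := C.rank.1
  obtain ⟨p, hp1, hp2⟩ := exists_seq_rel
    (fun k p => IsProjection p ∧ N p ≤ ∑ k ∈ Finset.range k, N (t k))
    (fun k p p' => p' * p = p ∧ p' * t k = t k) ⟨0, isProjection_zero, by simp [hR.zero]⟩ (by
      rintro k p ⟨h1, h2⟩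
      obtain ⟨e, he, h3, ⟨y, hy⟩, h4⟩ := C.exists_lp ((1 - p) * t k)
      have hpe : p * e = 0 := by
        rw [hy, ← mul_assoc, ← mul_assoc, mul_sub, h1.idem]; simp
      have hep := h1.comm_of_orth he hpe
      refine ⟨p + e, ⟨h1.add he hpe, ?_⟩, ?_, ?_⟩
      · rw [rank_add_proj hR h1 he hpe, Finset.sum_range_succ, h4]
        linarith [hR.mul_le_right (1 - p) (t k)]
      · rw [add_mul, h1.idem, hep, add_zero]
      · have : e * t k = (1 - p) * t k := by
          rw [← h3, ← mul_assoc, mul_sub, hep]; simp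
        rw [add_mul, this, sub_mul]; simp)
  obtain ⟨g, hg, hg1, hg2⟩ := C.sup_rank p (fun k => (hp1 k).1) (fun k => (hp2 k).1) s
    (fun k => (hp1 k).2.trans (hs k))
  refine ⟨g, hg, fun k => ?_, hg2⟩
  rw [← (hp2 k).2, ← mul_assoc, hg1]

theorem Ctx2.complete (C : Ctx2 Q N) : RankComplete N := by
  have hR := C.rank.1
  intro u hu
  have : ∀ k : ℕ, ∃ n₀ : ℕ, ∀ m n : ℕ, n₀ ≤ m → n₀ ≤ n → N (u m - u n) < (1 / 2 : ℝ) ^ k :=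
    fun k => hu _ (by positivity)
  choose M hM using this
  let φ : ℕ → ℕ := fun k => ∑ i ∈ Finset.range (k + 1), M i
  have hφM : ∀ k, M k ≤ φ k := fun k =>
    Finset.single_le_sum (f := M) (fun _ _ => Nat.zero_le _) (by simp)
  have hφ : ∀ k, φ k ≤ φ (k + 1) := by
    intro k; simp only [φ]; rw [Finset.sum_range_succ _ (k + 1)]; omega
  let x : ℕ → Q := fun k => u (φ k)
  let d : ℕ → Q := fun k => x (k + 1) - x k
  have hd : ∀ k, N (d k) ≤ (1 / 2 : ℝ) ^ k := fun k =>
    (hM k _ _ ((hφM k).trans (hφ k)) (hφM k)).le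
  have hg : ∀ n, ∃ g, IsProjection g ∧ (∀ k, n ≤ k → d k * g = d k) ∧
      N g ≤ 2 * (1 / 2 : ℝ) ^ n := by
    intro n
    obtain ⟨g, hg, h1, h2⟩ := C.countable_sup (fun k => star (d (n + k))) (2 * (1 / 2 : ℝ) ^ n) (by
      intro K
      calc ∑ k ∈ Finset.range K, N (star (d (n + k)))
          ≤ ∑ k ∈ Finset.range K, (1 / 2 : ℝ) ^ n * (1 / 2 : ℝ) ^ k := by
            apply Finset.sum_le_sum
            intro k _
            rw [C.rank_star, ← pow_add]
            exact hd _
        _ ≤ 2 * (1 / 2 : ℝ) ^ n := by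
            rw [← Finset.mul_sum, mul_comm]
            apply mul_le_mul_of_nonneg_right _ (by positivity)
            rw [geom_sum_eq (by norm_num)]
            have : (0 : ℝ) < (1 / 2) ^ K := by positivity
            rw [div_le_iff_of_neg (by norm_num)]
            linarith)
    refine ⟨g, hg, ?_, h2⟩
    intro k hk
    obtain ⟨j, rfl⟩ := Nat.exists_eq_add_of_le hk
    have := congrArg star (h1 j); simpa [hg.sa] using this
  choose g hg1 hg2 hg3 using hg
  have hx : ∀ n j, x (n + j) * (1 - g n) = x n * (1 - g n) := by
    intro n j
    induction j with
    | zero => rfl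
    | succ j ih =>
      rw [← ih]
      have : d (n + j) * (1 - g n) = 0 := by
        rw [mul_sub, mul_one, hg2 n (n + j) (by omega), sub_self]
      simp only [d] at this
      rw [sub_mul, sub_eq_zero] at this
      rw [← add_assoc, this]
  obtain ⟨y, hy⟩ := extend_right C.inj (fun n => 1 - g n) (fun n => x n * (1 - g n)) (by
    intro s
    refine ⟨x (s.sup id), fun i hi => ?_⟩
    have : i ≤ s.sup id := Finset.le_sup (f := id) hi
    obtain ⟨j, hj⟩ := Nat.exists_eq_add_of_le this
    rw [hj, hx])
  refine ⟨y, fun ε hε => ?_⟩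
  obtain ⟨n, hn⟩ := exists_pow_lt_of_lt_one (show 0 < ε / 3 by positivity)
    (show (1 / 2 : ℝ) < 1 by norm_num)
  have hxy : N (x n - y) ≤ 2 * (1 / 2 : ℝ) ^ n := by
    have : x n - y = (x n - y) * g n := by
      have := hy n
      have : (x n - y) * (1 - g n) = 0 := by rw [sub_mul, this, sub_self]
      rw [mul_sub, mul_one, sub_eq_zero] at this
      exact this
    rw [this]
    exact (hR.mul_le_right _ _).trans (hg3 n)
  refine ⟨M n, fun k hk => ?_⟩
  have h1 := hM n k (φ n) hk (hφM n)
  have h2 := hR.dist_triangle (u k) (x n) y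
  have h3 : N (u k - x n) < (1 / 2) ^ n := h1
  linarith

/-! ### Frames -/

/-- A family of partial isometries with common initial projection `h` and orthogonal ranges. -/
def FrameOn {ι : Type*} (h : Q) (s : Finset ι) (c : ι → Q) : Prop :=
  (∀ i ∈ s, star (c i) * c i = h) ∧ ∀ i ∈ s, ∀ j ∈ s, i ≠ j → star (c i) * c j = 0

/-- The range projection of a frame. -/
def fsum {ι : Type*} (s : Finset ι) (c : ι → Q) : Q := ∑ i ∈ s, c i * star (c i)

section Frame
variable {ι : Type*} {h : Q} {s : Finset ι} {c : ι → Q}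

theorem FrameOn.mono (H : FrameOn h s c) {t : Finset ι} (ht : t ⊆ s) : FrameOn h t c :=
  ⟨fun i hi => H.1 i (ht hi), fun i hi j hj => H.2 i (ht hi) j (ht hj)⟩

theorem FrameOn.piso (hP : ProperStar Q) (hh : IsProjection h) (H : FrameOn h s c) {i : ι}
    (hi : i ∈ s) : PIso (c i) :=
  PIso.of_ini hP (by rw [H.1 i hi]; exact hh)

theorem FrameOn.mul_h (hP : ProperStar Q) (hh : IsProjection h) (H : FrameOn h s c) {i : ι}
    (hi : i ∈ s) : c i * h = c i := by
  rw [← H.1 i hi]; exact (H.piso hP hh hi).mul_ini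

theorem FrameOn.h_star (hP : ProperStar Q) (hh : IsProjection h) (H : FrameOn h s c) {i : ι}
    (hi : i ∈ s) : h * star (c i) = star (c i) := by
  have := congrArg star (H.mul_h hP hh hi); simpa [hh.sa] using this

theorem FrameOn.fsum_mul (hP : ProperStar Q) (hh : IsProjection h) (H : FrameOn h s c) {i : ι}
    (hi : i ∈ s) : fsum s c * c i = c i := by
  unfold fsum
  rw [Finset.sum_mul, Finset.sum_eq_single i]
  · exact H.piso hP hh hi
  · intro j hj hji
    rw [mul_assoc, H.2 j hj i hi hji, mul_zero]
  · intro h'; exact absurd hi h'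

theorem fsum_star : star (fsum s c) = fsum s c := by
  simp [fsum]

theorem FrameOn.star_fsum (hP : ProperStar Q) (hh : IsProjection h) (H : FrameOn h s c) {i : ι}
    (hi : i ∈ s) : star (c i) * fsum s c = star (c i) := by
  have := congrArg star (H.fsum_mul hP hh hi); simpa [fsum_star] using this

theorem FrameOn.proj (hP : ProperStar Q) (hh : IsProjection h) (H : FrameOn h s c) :
    IsProjection (fsum s c) := by
  refine ⟨fsum_star, ?_⟩
  nth_rewrite 2 [fsum]
  rw [Finset.mul_sum, fsum]
  refine Finset.sum_congr rfl fun i hi => ?_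
  rw [← mul_assoc, ← fsum, H.fsum_mul hP hh hi]

theorem FrameOn.fsum_insert_orth [DecidableEq ι] {a : ι} (ha : a ∉ s)
    (H : FrameOn h (insert a s) c) : fsum s c * (c a * star (c a)) = 0 := by
  unfold fsum
  rw [Finset.sum_mul]
  apply Finset.sum_eq_zero
  intro i hi
  have : star (c i) * c a = 0 := H.2 i (Finset.mem_insert_of_mem hi) a
    (Finset.mem_insert_self _ _) (by rintro rfl; exact ha hi)
  calc c i * star (c i) * (c a * star (c a)) = c i * (star (c i) * c a) * star (c a) := by
        simp only [mul_assoc]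
    _ = 0 := by rw [this]; simp

theorem FrameOn.rank (hN : IsPseudoRankFunction N) (hP : ProperStar Q) (hh : IsProjection h)
    (H : FrameOn h s c) : N (fsum s c) = s.card * N h := by
  classical
  induction s using Finset.induction_on with
  | empty => simp [fsum, hN.zero]
  | insert a s ha ih =>
    have Hs := H.mono (Finset.subset_insert a s)
    have hp := H.piso hP hh (Finset.mem_insert_self a s)
    have h1 : fsum (insert a s) c = fsum s c + c a * star (c a) := by
      unfold fsum
      rw [Finset.sum_insert ha, add_comm]
    rw [h1, rank_add_proj hN (Hs.proj hP hh) hp.fin (H.fsum_insert_orth ha), ih Hs,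
      ← (rank_piso hN hp).1, H.1 a (Finset.mem_insert_self a s), Finset.card_insert_of_notMem ha]
    push_cast
    ring

theorem fsum_le {g : Q} (hg : ∀ i ∈ s, g * c i = c i) : g * fsum s c = fsum s c := by
  unfold fsum
  rw [Finset.mul_sum]
  exact Finset.sum_congr rfl fun i hi => by rw [← mul_assoc, hg i hi]

theorem FrameOn.orth_of_compl (hP : ProperStar Q) (hh : IsProjection h) (H : FrameOn h s c)
    {g v : Q} (hgp : IsProjection g) (hg : ∀ i ∈ s, g * c i = c i)
    (hv : (g - fsum s c) * v = v) {i : ι} (hi : i ∈ s) : star (c i) * v = 0 := by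
  have : star (c i) * g = star (c i) := by
    have := congrArg star (hg i hi); simpa [hgp.sa] using this
  rw [← hv, ← mul_assoc, mul_sub, this, H.star_fsum hP hh hi, sub_self, zero_mul]

end Frame

/-- Extending a frame inside a projection `g`. -/
theorem Ctx2.fill (C : Ctx2 Q N) {ι : Type*} [DecidableEq ι] {h g : Q} (hh : IsProjection h)
    (hg : IsProjection g) (s t : Finset ι) (hst : Disjoint s t) (c : ι → Q) (H : FrameOn h s c)
    (hgc : ∀ i ∈ s, g * c i = c i) (hN : ((s.card + t.card : ℕ) : ℝ) * N h ≤ N g) :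
    ∃ c' : ι → Q, (∀ i ∈ s, c' i = c i) ∧ FrameOn h (s ∪ t) c' ∧
      ∀ i ∈ s ∪ t, g * c' i = c' i := by
  have hR := C.rank.1
  have hNh := hR.nonneg h
  induction t using Finset.induction_on with
  | empty => exact ⟨c, fun _ _ => rfl, by simpa using H, by simpa using hgc⟩
  | insert a t ha ih =>
    have hst' : Disjoint s t := hst.mono_right (Finset.subset_insert a t)
    have has : a ∉ s := fun h => (Finset.disjoint_left.1 hst h) (Finset.mem_insert_self _ _)
    rw [Finset.card_insert_of_notMem ha] at hN
    push_cast at hN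
    obtain ⟨c', h1, h2, h3⟩ := ih hst' (by push_cast; linarith)
    have hcard : (s ∪ t).card = s.card + t.card := Finset.card_union_of_disjoint hst'
    have hle := fsum_le (s := s ∪ t) (c := c') h3
    have hD := h2.proj C.proper hh
    have hrank := h2.rank hR C.proper hh
    rw [hcard] at hrank
    push_cast at hrank
    obtain ⟨v, hv, hv1, hv2⟩ := C.compar hh (hg.sub hD hle) (by
      rw [rank_sub_proj hR hg hD hle, hrank]; linarith)
    have hast : a ∉ s ∪ t := by simp [has, ha]
    have hne : ∀ i ∈ s ∪ t, i ≠ a := fun i hi h => hast (h ▸ hi)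
    have horth : ∀ i ∈ s ∪ t, star (c' i) * v = 0 := fun i hi =>
      h2.orth_of_compl C.proper hh hg h3 hv2 hi
    refine ⟨Function.update c' a v, ?_, ⟨?_, ?_⟩, ?_⟩
    · intro i hi
      rw [Function.update_of_ne (hne i (Finset.mem_union_left _ hi)), h1 i hi]
    · intro i hi
      rw [Finset.union_insert, Finset.mem_insert] at hi
      rcases hi with rfl | hi
      · simpa using hv1
      · rw [Function.update_of_ne (hne i hi)]; exact h2.1 i hi
    · intro i hi j hj hij
      rw [Finset.union_insert, Finset.mem_insert] at hi hj
      rcases hi with rfl | hi <;> rcases hj with rfl | hj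
      · exact absurd rfl hij
      · rw [Function.update_of_ne (hne j hj), Function.update_self]
        have := congrArg star (horth j hj); simpa using this
      · rw [Function.update_of_ne (hne i hi), Function.update_self]
        exact horth i hi
      · rw [Function.update_of_ne (hne i hi), Function.update_of_ne (hne j hj)]
        exact h2.2 i hi j hj hij
    · intro i hi
      rw [Finset.union_insert, Finset.mem_insert] at hi
      rcases hi with rfl | hi
      · rw [Function.update_self, ← hv2, ← mul_assoc, mul_sub, hg.idem, hle]
      · rw [Function.update_of_ne (hne i hi)]; exact h3 i hi

end Star2

/-! ### Matrices over a `*`-Pythagorean field -/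

section Mat
open Matrix
variable {F : Type} [Field F] [StarRing F]

theorem pyth_sum (hpy : StarPythagorean F) {ι : Type*} (s : Finset ι) (x : ι → F) :
    ∃ z, ∑ i ∈ s, x i * star (x i) = z * star z := by
  classical
  induction s using Finset.induction_on with
  | empty => exact ⟨0, by simp⟩
  | insert a s ha ih =>
    obtain ⟨z, hz⟩ := ih
    obtain ⟨w, hw⟩ := hpy (x a) z
    exact ⟨w, by rw [Finset.sum_insert ha, hz, hw]⟩

theorem exists_onb (hF : PosDefStar F) (hpy : StarPythagorean F) {n : ℕ} :
    ∀ (d : ℕ) (S : Submodule F (Fin n → F)), Module.finrank F S ≤ d →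
    ∃ (κ : Type) (_ : Fintype κ) (_ : DecidableEq κ) (W : Matrix (Fin n) κ F),
      Wᴴ * W = 1 ∧ (∀ x ∈ S, (W * Wᴴ) *ᵥ x = x) ∧ ∀ j, (fun i => W i j) ∈ S := by
  intro d
  induction d with
  | zero =>
    intro S hS
    refine ⟨Empty, inferInstance, inferInstance, fun _ j => j.elim, ?_, ?_, ?_⟩
    · ext i; exact i.elim
    · intro x hx
      have : S = ⊥ := by
        rw [← Submodule.finrank_eq_zero (R := F)]; omega
      rw [this, Submodule.mem_bot] at hx
      rw [hx, mulVec_zero]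
    · intro j; exact j.elim
  | succ d ih =>
    intro S hS
    by_cases hbot : S = ⊥
    · exact ih S (by rw [hbot]; simp)
    obtain ⟨v, hvS, hv0⟩ := Submodule.exists_mem_ne_zero_of_ne_bot hbot
    obtain ⟨z, hz⟩ := pyth_sum hpy Finset.univ v
    have hz0 : z ≠ 0 := by
      rintro rfl
      apply hv0
      funext i
      refine hF n v ?_ i
      rw [zero_mul] at hz
      rw [← hz]
      exact Finset.sum_congr rfl fun i _ => mul_comm _ _
    let u : Fin n → F := z⁻¹ • v
    have huS : u ∈ S := S.smul_mem _ hvS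
    have huu : star u ⬝ᵥ u = 1 := by
      simp only [dotProduct, u, Pi.star_apply, Pi.smul_apply, smul_eq_mul, star_mul']
      calc ∑ i, star z⁻¹ * star (v i) * (z⁻¹ * v i)
          = (star z⁻¹ * z⁻¹) * ∑ i, v i * star (v i) := by
            rw [Finset.mul_sum]; exact Finset.sum_congr rfl fun i _ => by ring
        _ = 1 := by
            rw [hz, star_inv₀]
            have : star z ≠ 0 := by simpa using hz0
            field_simp
    let L : (Fin n → F) →ₗ[F] F :=
      { toFun := fun x => star u ⬝ᵥ x
        map_add' := fun x y => dotProduct_add _ _ _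
        map_smul' := fun c x => by simp }
    let S' : Submodule F (Fin n → F) := S ⊓ LinearMap.ker L
    have hlt : S' < S := by
      refine lt_of_le_of_ne inf_le_left fun h => ?_
      have : u ∈ S' := h ▸ huS
      have h2 : L u = 0 := this.2
      have h3 : L u = 1 := huu
      rw [h3] at h2
      exact one_ne_zero h2
    have := Submodule.finrank_lt_finrank_of_lt hlt
    obtain ⟨κ, i1, i2, W, h1, h2, h3⟩ := ih S' (by omega)
    have hWu : (replicateCol Unit u)ᴴ * W = 0 := by
      ext i j
      have : L (fun i => W i j) = 0 := (h3 j).2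
      simpa [Matrix.mul_apply, L, dotProduct] using this
    have hWu' : Wᴴ * replicateCol Unit u = 0 := by
      have := congrArg conjTranspose hWu
      simpa using this
    have huu' : (replicateCol Unit u)ᴴ * replicateCol Unit u = 1 := by
      ext i j
      simpa [Matrix.mul_apply, dotProduct, Matrix.one_apply] using huu
    refine ⟨Unit ⊕ κ, inferInstance, inferInstance, fromCols (replicateCol Unit u) W, ?_, ?_, ?_⟩
    · rw [conjTranspose_fromCols_eq_fromRows_conjTranspose, fromRows_mul_fromCols, huu', hWu, hWu',
        h1, fromBlocks_one]
    · intro x hx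
      rw [conjTranspose_fromCols_eq_fromRows_conjTranspose, fromCols_mul_fromRows, add_mulVec]
      have e1 : (replicateCol Unit u * (replicateCol Unit u)ᴴ) *ᵥ x = (star u ⬝ᵥ x) • u := by
        ext i
        simp [Matrix.mul_apply, mulVec, dotProduct, Finset.sum_mul]
        exact Finset.sum_congr rfl fun i _ => by ring
      have hx0 : x - (star u ⬝ᵥ x) • u ∈ S' := by
        refine ⟨S.sub_mem hx (S.smul_mem _ huS), ?_⟩
        change star u ⬝ᵥ (x - (star u ⬝ᵥ x) • u) = 0
        rw [dotProduct_sub, dotProduct_smul, huu]; simp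
      have e2 := h2 _ hx0
      have e3 : (W * Wᴴ) *ᵥ u = 0 := by
        have : Wᴴ *ᵥ u = 0 := by
          ext i
          have := congrFun (congrFun hWu' i) ()
          simpa [Matrix.mul_apply, mulVec, dotProduct] using this
        rw [← mulVec_mulVec, this, mulVec_zero]
      rw [mulVec_sub, mulVec_smul, e3, smul_zero, sub_zero] at e2
      rw [e1, e2]; simp
    · rintro (j | j)
      · exact huS
      · exact (h3 j).1

theorem exists_range_onb (hF : PosDefStar F) (hpy : StarPythagorean F) {n : ℕ}
    (a : Matrix (Fin n) (Fin n) F) :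
    ∃ (κ : Type) (_ : Fintype κ) (_ : DecidableEq κ) (W : Matrix (Fin n) κ F),
      Wᴴ * W = 1 ∧ W * Wᴴ * a = a ∧ ∃ Y : Matrix (Fin n) κ F, W = a * Y := by
  obtain ⟨κ, i1, i2, W, h1, h2, h3⟩ := exists_onb hF hpy _ (LinearMap.range a.mulVecLin) le_rfl
  refine ⟨κ, i1, i2, W, h1, ?_, ?_⟩
  · ext i j
    have := h2 (a *ᵥ Pi.single j 1) ⟨_, rfl⟩
    rw [mulVec_mulVec] at this
    have := congrFun this i
    simpa using this
  · choose y hy using h3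
    refine ⟨Matrix.of fun i j => y j i, ?_⟩
    ext i j
    have := congrFun (hy j) i
    simp [mulVec, dotProduct] at this
    rw [← this]
    simp [Matrix.mul_apply]

theorem card_le_of_mul_eq_one {κ κ' : Type} [Fintype κ] [Fintype κ'] [DecidableEq κ]
    (A : Matrix κ κ' F) (B : Matrix κ' κ F) (h : A * B = 1) :
    Fintype.card κ ≤ Fintype.card κ' := by
  have h1 := Matrix.rank_mul_le_left A B
  rw [h, Matrix.rank_one] at h1
  exact h1.trans (Matrix.rank_le_card_width A)

theorem exists_piso_matrix (hF : PosDefStar F) (hpy : StarPythagorean F) {n : ℕ}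
    (a : Matrix (Fin n) (Fin n) F) :
    ∃ w : Matrix (Fin n) (Fin n) F, w * star w * w = w ∧ w * star w * a = a ∧
      a * (star w * w) = a ∧ (∃ y, w = a * y) ∧ ∃ y, w = y * a := by
  obtain ⟨κ, i1, i2, W, h1, h2, Y, hY⟩ := exists_range_onb hF hpy a
  obtain ⟨κ', i1', i2', W', h1', h2', Y', hY'⟩ := exists_range_onb hF hpy aᴴ
  have h2'' : a * (W' * W'ᴴ) = a := by
    have := congrArg conjTranspose h2'
    simpa [Matrix.mul_assoc] using this
  have h2a : aᴴ * (W * Wᴴ) = aᴴ := by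
    have := congrArg conjTranspose h2
    simpa [Matrix.mul_assoc] using this
  have hc : Fintype.card κ = Fintype.card κ' := by
    apply le_antisymm
    · apply card_le_of_mul_eq_one (Wᴴ * a * W') (W'ᴴ * Y)
      calc Wᴴ * a * W' * (W'ᴴ * Y) = Wᴴ * (a * (W' * W'ᴴ)) * Y := by simp only [Matrix.mul_assoc]
        _ = 1 := by rw [h2'', Matrix.mul_assoc, ← hY, h1]
    · apply card_le_of_mul_eq_one (W'ᴴ * aᴴ * W) (Wᴴ * Y')
      calc W'ᴴ * aᴴ * W * (Wᴴ * Y') = W'ᴴ * (aᴴ * (W * Wᴴ)) * Y' := by simp only [Matrix.mul_assoc]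
        _ = 1 := by rw [h2a, Matrix.mul_assoc, ← hY', h1']
  let σ : κ ≃ κ' := Fintype.equivOfCardEq hc
  let V : Matrix (Fin n) κ F := W'.submatrix id σ
  have hV1 : Vᴴ * V = 1 := by
    simp only [V, conjTranspose_submatrix]
    rw [Matrix.submatrix_mul _ _ _ _ _ Function.bijective_id |>.symm, h1']
    simp
  have hV2 : V * Vᴴ = W' * W'ᴴ := by
    simp only [V, conjTranspose_submatrix]
    rw [Matrix.submatrix_mul_equiv]
    simp
  have hV3 : V = aᴴ * Y'.submatrix id σ := by
    simp only [V]
    rw [hY']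
    ext i j
    simp [Matrix.mul_apply]
  have hs : star (W * Vᴴ) = V * Wᴴ := by
    rw [star_eq_conjTranspose]; simp
  have e1 : W * Vᴴ * star (W * Vᴴ) = W * Wᴴ := by
    rw [hs]
    calc W * Vᴴ * (V * Wᴴ) = W * (Vᴴ * V) * Wᴴ := by simp only [Matrix.mul_assoc]
      _ = W * Wᴴ := by rw [hV1]; simp
  have e2 : star (W * Vᴴ) * (W * Vᴴ) = V * Vᴴ := by
    rw [hs]
    calc V * Wᴴ * (W * Vᴴ) = V * (Wᴴ * W) * Vᴴ := by simp only [Matrix.mul_assoc]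
      _ = V * Vᴴ := by rw [h1]; simp
  refine ⟨W * Vᴴ, ?_, ?_, ?_, ?_, ?_⟩
  · rw [e1]
    calc W * Wᴴ * (W * Vᴴ) = W * (Wᴴ * W) * Vᴴ := by simp only [Matrix.mul_assoc]
      _ = W * Vᴴ := by rw [h1]; simp
  · rw [e1, h2]
  · rw [e2, hV2, h2'']
  · exact ⟨Y * Vᴴ, by rw [← Matrix.mul_assoc, ← hY]⟩
  · refine ⟨W * (Y'.submatrix id σ)ᴴ, ?_⟩
    nth_rewrite 1 [hV3]
    simp [Matrix.mul_assoc]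

end Mat

/-- The product of matrix algebras. -/
abbrev MatProd (F : Type) {k : ℕ} (n : Fin (k + 1) → ℕ) : Type :=
  (i : Fin (k + 1)) → Matrix (Fin (n i)) (Fin (n i)) F

/-- Local approximation through star homomorphisms. -/
def LocApprox (F : Type) [Field F] [StarRing F] {Q : Type} [Ring Q] [Algebra F Q] [StarRing Q]
    (N : Q → ℝ) : Prop :=
  ∀ ε : ℝ, 0 < ε → ∀ (m : ℕ) (x : Fin m → Q),
    ∃ (k : ℕ) (n : Fin (k + 1) → ℕ) (_ : ∀ i, 0 < n i) (Θ : MatProd F n →⋆ₐ[F] Q)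
      (y : Fin m → MatProd F n), ∀ i, N (x i - Θ (y i)) < ε

section Local
variable {F : Type} [Field F] [StarRing F] {Q : Type} [Ring Q] [Algebra F Q] [StarRing Q]
  {N : Q → ℝ}

theorem exists_piso_prod (hF : PosDefStar F) (hpy : StarPythagorean F) {k : ℕ}
    {n : Fin (k + 1) → ℕ} (a : MatProd F n) :
    ∃ w : MatProd F n, w * star w * w = w ∧ w * star w * a = a ∧
      a * (star w * w) = a ∧ (∃ y, w = a * y) ∧ ∃ y, w = y * a := by
  choose w h1 h2 h3 h4 h5 using fun i => exists_piso_matrix hF hpy (a i)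
  choose y hy using h4
  choose z hz using h5
  exact ⟨w, funext h1, funext h2, funext h3, ⟨y, funext hy⟩, ⟨z, funext hz⟩⟩

theorem exists_mul_ne_zero (hS : IsSimpleRing Q) {e f : Q} (he : e ≠ 0) (hf : f ≠ 0) :
    ∃ z, e * z * f ≠ 0 := by
  by_contra hcon
  push Not at hcon
  let I : TwoSidedIdeal Q := TwoSidedIdeal.mk' {x | ∀ z, e * z * x = 0} (by simp)
    (by intro x y hx hy z; rw [mul_add, hx z, hy z, add_zero])
    (by intro x hx z; rw [mul_neg, hx z, neg_zero])
    (by intro x y hy z; have := hy (z * x); simpa only [mul_assoc] using this)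
    (by intro x y hx z; rw [← mul_assoc, hx z, zero_mul])
  have hI : ∀ x, x ∈ I ↔ ∀ z, e * z * x = 0 := by
    intro x
    exact TwoSidedIdeal.mem_mk' _ _ _ _ _ _ _
  have := hS.simple
  rcases eq_bot_or_eq_top I with h | h
  · have : f ∈ I := (hI f).2 hcon
    rw [h] at this
    exact hf ((TwoSidedIdeal.mem_bot Q).1 this)
  · have : (1 : Q) ∈ I := by rw [h]; trivial
    have := (hI 1).1 this 1
    simp at this
    exact he this

theorem ctx2_of_locApprox (hF : PosDefStar F) (hpy : StarPythagorean F) (C : Ctx Q N)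
    (hS : IsSimpleRing Q) (hN0 : ∃ N : Q → ℝ, IsRankFunction N ∧ Set.range N = Set.Icc (0 : ℝ) 1)
    (hL : LocApprox F N) : Ctx2 Q N := by
  have hR := C.rank.1
  refine { C with hit := ?_, nomin := ?_ }
  · intro e f he hf he0 hf0
    obtain ⟨z, hz⟩ := exists_mul_ne_zero hS he0 hf0
    set x := e * z * f with hx
    have hex : e * x = x := by rw [hx, ← mul_assoc, ← mul_assoc, he.idem]
    have hxf : x * f = x := by rw [hx, mul_assoc, hf.idem]
    have hpos : 0 < N x := lt_of_le_of_ne (hR.nonneg x) (fun h => hz (C.rank.2 x h.symm))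
    obtain ⟨k, n, hn, Θ, y, hy⟩ := hL (N x / 4) (by positivity) 1 (fun _ => x)
    have hy := hy 0
    obtain ⟨w', h1, h2, h3, ⟨y1, h4⟩, ⟨y2, h5⟩⟩ := exists_piso_prod hF hpy (y 0)
    set a := Θ (y 0) with ha
    set w := Θ w' with hwdef
    have hw : PIso w := by
      have := congrArg Θ h1; simpa [PIso, map_star] using this
    have hwa : w * star w * a = a := by
      have := congrArg Θ h2; simpa [map_star] using this
    have hw4 : w = a * Θ y1 := by rw [ha, ← map_mul, ← h4]
    have hw5 : w = Θ y2 * a := by rw [ha, ← map_mul, ← h5]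
    have b1 : N ((1 - e) * w) ≤ N x / 4 := by
      have : (1 - e) * w = (1 - e) * (a - x) * Θ y1 := by
        rw [mul_sub _ a, sub_mul _ _ x, hex, hw4]; simp [mul_assoc]
      rw [this]
      refine (hR.mul_mul_le _ _ _).trans ?_
      rw [hR.sub_comm]; exact hy.le
    have b2 : N (w * (1 - f)) ≤ N x / 4 := by
      have : w * (1 - f) = Θ y2 * (a - x) * (1 - f) := by
        rw [mul_assoc, sub_mul a, mul_sub x, hxf, hw5]; simp [mul_assoc]
      rw [this]
      refine (hR.mul_mul_le _ _ _).trans ?_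
      rw [hR.sub_comm]; exact hy.le
    have b3 : N x * 3 / 4 ≤ N w := by
      have h6 : N a ≤ N w := by
        nth_rewrite 1 [← hwa]
        rw [mul_assoc]; exact hR.mul_le_left _ _
      have h7 := hR.subadditive (x - a) a
      rw [sub_add_cancel] at h7
      linarith
    obtain ⟨g1, hg1, hg1a, hg1b, hg1c⟩ := C.cut hw.ini (1 - f)
    obtain ⟨g, hg, hga, hgb, hgc⟩ := C.cut hg1 ((1 - e) * w)
    have c1 : N ((1 - f) * (star w * w)) ≤ N x / 4 := by
      rw [← mul_assoc]
      refine (hR.mul_le_left _ _).trans ?_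
      rw [← C.rank_star]
      simpa [hf.sa] using b2
    have c2 : N ((1 - e) * w * g1) ≤ N x / 4 := (hR.mul_le_left _ _).trans b1
    rw [rank_sub_proj hR hw.ini hg1 hg1a] at hg1c
    rw [rank_sub_proj hR hg1 hg hga] at hgc
    have c3 := (rank_piso hR hw).2
    have hgpos : 0 < N g := by linarith
    have hwg : star w * w * g = g := by rw [← hga, ← mul_assoc, hg1a]
    have hini : star (w * g) * (w * g) = g := by
      rw [star_mul, hg.sa, mul_assoc, ← mul_assoc (star w), hwg, hg.idem]
    refine ⟨w * g, ?_, PIso.of_ini C.proper (by rw [hini]; exact hg), ?_, ?_⟩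
    · intro h0
      rw [h0] at hini
      simp at hini
      rw [← hini, hR.zero] at hgpos
      exact lt_irrefl _ hgpos
    · rw [mul_assoc, sub_mul, one_mul, sub_eq_zero] at hgb
      exact hgb.symm
    · have : f * g = g := by
        rw [sub_mul, one_mul, sub_eq_zero] at hg1b
        rw [← hga, ← mul_assoc, ← hg1b]
      rw [mul_assoc, hf.comm_of_le hg this]
  · intro p hp hp0
    by_contra hcon
    push Not at hcon
    obtain ⟨N0, hN0, hrange⟩ := hN0
    have C0 : Ctx Q N0 := { C with rank := hN0 }
    have hR0 := hN0.1
    have hpos : 0 < N0 p := lt_of_le_of_ne (hR0.nonneg p) (fun h => hp0 (hN0.2 p h.symm))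
    have hle1 := hR0.le_one p
    obtain ⟨x, hx⟩ : N0 p / 2 ∈ Set.range N0 := by
      rw [hrange]; constructor <;> linarith
    have hx0 : x ≠ 0 := by
      rintro rfl
      rw [hR0.zero] at hx
      linarith
    obtain ⟨z, hz⟩ := exists_mul_ne_zero hS hp0 hx0
    obtain ⟨e, he, h1, ⟨y, hy⟩, h2⟩ := C0.exists_lp (p * z * x)
    have hpe : p * e = e := by
      rw [hy, ← mul_assoc, ← mul_assoc, ← mul_assoc, hp.idem]
    have he0 : e ≠ 0 := by
      rintro rfl
      rw [zero_mul] at h1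
      exact hz h1.symm
    have := hcon e he hpe he0
    rw [this] at h2
    have := hR0.mul_le_right (p * z) x
    linarith

end Local

/-! ### Approximation by matrix units in a corner -/

section Corner
variable {F : Type} [Field F] [StarRing F] {Q : Type} [Ring Q] [Algebra F Q] [StarRing Q]
  {N : Q → ℝ}

/-- Span of the matrix units attached to a frame. -/
def spn (F : Type) [Field F] {Q : Type} [Ring Q] [Algebra F Q] [StarRing Q]
    (K : ℕ) (c : ℕ → Q) : Submodule F Q :=
  Submodule.span F {x | ∃ i j, i < K ∧ j < K ∧ x = c i * star (c j)}

theorem frame_of_system (C : Ctx2 Q N) {h : Q} (hh : IsProjection h) (hpos : 0 < N h)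
    {J T : Type} [Fintype J] [DecidableEq J] (τ : J → T) (X : J → Q) (P : T → Q)
    (hPp : ∀ t, IsProjection (P t))
    (hX1 : ∀ x, star (X x) * X x = P (τ x)) (hX0 : ∀ x y, x ≠ y → star (X x) * X y = 0) :
    ∃ (K : ℕ) (c : ℕ → Q), FrameOn h (Finset.range K) c ∧
      (∀ i ∈ Finset.range K, (∑ x, X x * star (X x)) * c i = c i) ∧
      N ((∑ x, X x * star (X x)) - fsum (Finset.range K) c) ≤ Fintype.card J * N h ∧
      ∀ x y, τ x = τ y →
        fsum (Finset.range K) c * (X x * star (X y)) * fsum (Finset.range K) c ∈ spn F K c := by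
  classical
  have hR := C.rank.1
  have hXP : ∀ x, X x * P (τ x) = X x := by
    intro x
    have : PIso (X x) := PIso.of_ini C.proper (by rw [hX1]; exact hPp _)
    have := this.mul_ini
    rwa [hX1] at this
  have hPX : ∀ x, P (τ x) * star (X x) = star (X x) := by
    intro x
    have := congrArg star (hXP x)
    rwa [star_mul, (hPp _).sa] at this
  have key : ∀ t, ∃ (K : ℕ) (d : ℕ → Q), FrameOn h (Finset.range K) d ∧
      (∀ i ∈ Finset.range K, P t * d i = d i) ∧ N (P t - fsum (Finset.range K) d) ≤ N h := by
    intro t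
    have hfl := Nat.floor_le (div_nonneg (hR.nonneg (P t)) hpos.le)
    have hfl2 := Nat.lt_floor_add_one (N (P t) / N h)
    set K := ⌊N (P t) / N h⌋₊ with hK
    rw [le_div_iff₀ hpos] at hfl
    rw [div_lt_iff₀ hpos] at hfl2
    obtain ⟨d, -, h2, h3⟩ := C.fill (ι := ℕ) hh (hPp t) ∅ (Finset.range K) (by simp) (fun _ => 0)
      (by simp [FrameOn]) (by simp) (by simpa using hfl)
    rw [Finset.empty_union] at h2 h3
    refine ⟨K, d, h2, h3, ?_⟩
    rw [rank_sub_proj hR (hPp t) (h2.proj C.proper hh) (fsum_le h3),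
      h2.rank hR C.proper hh, Finset.card_range]
    linarith
  choose a d hd hPd hdN using key
  let ι := Σ x : J, Fin (a (τ x))
  let c0 : ι → Q := fun z => X z.1 * d (τ z.1) z.2
  let σ : ι ≃ Fin (Fintype.card ι) := Fintype.equivFin ι
  let K := Fintype.card ι
  let c : ℕ → Q := fun i => if hi : i < K then c0 (σ.symm ⟨i, hi⟩) else 0
  have hc : ∀ i (hi : i < K), c i = c0 (σ.symm ⟨i, hi⟩) := fun i hi => dif_pos hi
  have hcσ : ∀ z, c (σ z) = c0 z := by
    intro z
    rw [hc _ (σ z).2]; simp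
  have hf0 : ∀ z z' : ι, star (c0 z) * c0 z' = if z = z' then h else 0 := by
    rintro ⟨x, s⟩ ⟨x', s'⟩
    change star (X x * d (τ x) s) * (X x' * d (τ x') s') = _
    have e1 : star (X x * d (τ x) s) * (X x' * d (τ x') s')
        = star (d (τ x) s) * (star (X x) * X x') * d (τ x') s' := by
      rw [star_mul]; simp only [mul_assoc]
    rw [e1]
    by_cases hx : x = x'
    · subst hx
      rw [hX1, mul_assoc, hPd _ _ (Finset.mem_range.2 s'.2)]
      by_cases hs : s = s'
      · subst hs
        rw [if_pos rfl]
        exact (hd _).1 _ (Finset.mem_range.2 s.2)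
      · rw [if_neg (fun hz => hs (by cases hz; rfl))]
        exact (hd _).2 _ (Finset.mem_range.2 s.2) _ (Finset.mem_range.2 s'.2)
          (fun h => hs (Fin.ext h))
    · rw [hX0 _ _ hx, if_neg (fun hz => hx (congrArg Sigma.fst hz))]; simp
  have hframe : FrameOn h (Finset.range K) c := by
    constructor
    · intro i hi
      rw [hc i (Finset.mem_range.1 hi), hf0, if_pos rfl]
    · intro i hi j hj hij
      rw [hc i (Finset.mem_range.1 hi), hc j (Finset.mem_range.1 hj), hf0, if_neg]
      simpa using hij
  have hfs : fsum (Finset.range K) c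
      = ∑ x, X x * fsum (Finset.range (a (τ x))) (d (τ x)) * star (X x) := by
    unfold fsum
    rw [Finset.sum_range (fun i => c i * star (c i))]
    rw [← Equiv.sum_comp σ, Fintype.sum_sigma]
    refine Finset.sum_congr rfl fun x _ => ?_
    rw [Finset.sum_range, Finset.mul_sum, Finset.sum_mul]
    refine Finset.sum_congr rfl fun s _ => ?_
    rw [hcσ]
    change X x * d (τ x) s * star (X x * d (τ x) s) = _
    rw [star_mul]; simp only [mul_assoc]
  have hpX : ∀ x, (∑ y, X y * star (X y)) * X x = X x := by
    intro x
    rw [Finset.sum_mul, Finset.sum_eq_single x]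
    · rw [mul_assoc, hX1, hXP]
    · intro y _ hy; rw [mul_assoc, hX0 _ _ hy, mul_zero]
    · simp
  have hDX : ∀ x, fsum (Finset.range K) c * X x
      = X x * fsum (Finset.range (a (τ x))) (d (τ x)) := by
    intro x
    have h1 : P (τ x) * fsum (Finset.range (a (τ x))) (d (τ x))
      = fsum (Finset.range (a (τ x))) (d (τ x)) := fsum_le (hPd _)
    have h2 := (hPp (τ x)).comm_of_le ((hd (τ x)).proj C.proper hh) h1
    rw [hfs, Finset.sum_mul, Finset.sum_eq_single x]
    · rw [mul_assoc, hX1, mul_assoc, h2]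
    · intro y _ hy; rw [mul_assoc, hX0 _ _ hy, mul_zero]
    · simp
  refine ⟨K, c, hframe, ?_, ?_, ?_⟩
  · intro i hi
    rw [hc i (Finset.mem_range.1 hi)]
    change _ * (X _ * _) = X _ * _
    rw [← mul_assoc, hpX]
  · rw [hfs, ← Finset.sum_sub_distrib]
    refine (hR.sum_le _ _).trans ?_
    have : ∀ x ∈ Finset.univ, N (X x * star (X x)
        - X x * fsum (Finset.range (a (τ x))) (d (τ x)) * star (X x)) ≤ N h := by
      intro x _
      have : X x * star (X x) - X x * fsum (Finset.range (a (τ x))) (d (τ x)) * star (X x)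
          = X x * (P (τ x) - fsum (Finset.range (a (τ x))) (d (τ x))) * star (X x) := by
        rw [mul_sub, sub_mul, hXP]
      rw [this]
      exact (hR.mul_mul_le _ _ _).trans (hdN _)
    refine (Finset.sum_le_sum this).trans ?_
    simp
  · intro x y hxy
    have hDX' : star (X y) * fsum (Finset.range K) c
        = fsum (Finset.range (a (τ y))) (d (τ y)) * star (X y) := by
      have := congrArg star (hDX y)
      rwa [star_mul, star_mul, fsum_star, fsum_star] at this
    have e1 : fsum (Finset.range K) c * (X x * star (X y)) * fsum (Finset.range K) c
        = ∑ s ∈ Finset.range (a (τ x)), (X x * d (τ x) s) * star (X y * d (τ y) s) := by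
      rw [← mul_assoc, hDX, mul_assoc, hDX', ← hxy]
      have := ((hd (τ x)).proj C.proper hh).idem
      calc _ = X x * (fsum (Finset.range (a (τ x))) (d (τ x)) *
            fsum (Finset.range (a (τ x))) (d (τ x))) * star (X y) := by simp only [mul_assoc]
        _ = _ := by
          rw [this, fsum, Finset.mul_sum, Finset.sum_mul]
          refine Finset.sum_congr rfl fun s _ => ?_
          rw [star_mul]; simp only [mul_assoc]
    rw [e1]
    refine Submodule.sum_mem _ fun s hs => Submodule.subset_span ?_
    have hs1 := Finset.mem_range.1 hs
    have hs2 : s < a (τ y) := by rw [← hxy]; exact hs1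
    refine ⟨σ ⟨x, ⟨s, hs1⟩⟩, σ ⟨y, ⟨s, hs2⟩⟩, (σ _).2, (σ _).2, ?_⟩
    rw [hcσ, hcσ]

end Corner

section MatSys
open Matrix
variable {F : Type} [Field F] [StarRing F] {Q : Type} [Ring Q] [Algebra F Q] [StarRing Q]
  {N : Q → ℝ}

theorem frame_of_matprod (hF : PosDefStar F) (hpy : StarPythagorean F) (C : Ctx2 Q N)
    {k : ℕ} {n : Fin (k + 1) → ℕ} (hn : ∀ i, 0 < n i) (Θ : MatProd F n →⋆ₐ[F] Q)
    (a : MatProd F n) :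
    ∃ p, IsProjection p ∧ p * Θ a = Θ a ∧ (∃ y, p = Θ a * y) ∧ ∃ M : ℕ,
      ∀ h, IsProjection h → 0 < N h → ∃ (K : ℕ) (c : ℕ → Q), FrameOn h (Finset.range K) c ∧
        (∀ i ∈ Finset.range K, p * c i = c i) ∧
        N (p - fsum (Finset.range K) c) ≤ M * N h ∧
        ∀ y, fsum (Finset.range K) c * Θ y * fsum (Finset.range K) c ∈ spn F K c := by
  classical
  choose κ i1 i2 W hW1 hW2 Y hWY using fun j => exists_range_onb hF hpy (a j)
  let J := Σ j, κ j
  let o : (j : Fin (k + 1)) → Fin (n j) := fun j => ⟨0, hn j⟩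
  let X0 : J → MatProd F n := fun x => Pi.single x.1 (W x.1 * Matrix.single x.2 (o x.1) (1 : F))
  let P0 : Fin (k + 1) → MatProd F n := fun j => Pi.single j (Matrix.single (o j) (o j) (1 : F))
  let p0 : MatProd F n := fun j => W j * (W j)ᴴ
  have hstar : ∀ x, star (X0 x)
      = Pi.single x.1 (Matrix.single (o x.1) x.2 (1 : F) * (W x.1)ᴴ) := by
    intro x
    change star (Pi.single (M := fun j => Matrix (Fin (n j)) (Fin (n j)) F) x.1 (W x.1 * Matrix.single x.2 (o x.1) (1 : F))) = _
    rw [← Pi.single_star, star_eq_conjTranspose]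
    simp
  have hXX : ∀ x y, x ≠ y → star (X0 x) * X0 y = 0 := by
    rintro ⟨j, b⟩ ⟨j', b'⟩ hne
    rw [hstar]
    by_cases hj : j = j'
    · subst hj
      have hb : b ≠ b' := fun h => hne (by rw [h])
      change Pi.single j _ * Pi.single j _ = _
      rw [← Pi.single_mul]
      have : Matrix.single (o j) b (1 : F) * (W j)ᴴ * (W j * Matrix.single b' (o j) (1:F)) = 0 := by
        calc _ = Matrix.single (o j) b (1 : F) * ((W j)ᴴ * W j) * Matrix.single b' (o j) (1:F) := by
              simp only [Matrix.mul_assoc]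
          _ = 0 := by rw [hW1, Matrix.mul_one, Matrix.single_mul_single_of_ne _ _ _ _ hb]
      rw [this, Pi.single_zero]
    · funext l
      change (Pi.single j _ : MatProd F n) l * (Pi.single j' _ : MatProd F n) l = 0
      by_cases hl : l = j
      · subst hl
        rw [Pi.single_eq_of_ne hj, mul_zero]
      · rw [Pi.single_eq_of_ne hl, zero_mul]
  have hXX1 : ∀ x, star (X0 x) * X0 x = P0 x.1 := by
    rintro ⟨j, b⟩
    rw [hstar]
    change Pi.single j _ * Pi.single j _ = Pi.single j _
    rw [← Pi.single_mul]
    congr 1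
    calc _ = Matrix.single (o j) b (1 : F) * ((W j)ᴴ * W j) * Matrix.single b (o j) (1:F) := by
              simp only [Matrix.mul_assoc]
      _ = _ := by rw [hW1, Matrix.mul_one, Matrix.single_mul_single_same, one_mul]
  have hXX2 : ∀ j b b', X0 ⟨j, b⟩ * star (X0 ⟨j, b'⟩)
      = Pi.single j (W j * Matrix.single b b' (1 : F) * (W j)ᴴ) := by
    intro j b b'
    rw [hstar]
    change Pi.single j _ * Pi.single j _ = Pi.single j _
    rw [← Pi.single_mul]
    congr 1
    calc _ = W j * (Matrix.single b (o j) (1 : F) * Matrix.single (o j) b' (1:F)) * (W j)ᴴ := by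
              simp only [Matrix.mul_assoc]
      _ = _ := by rw [Matrix.single_mul_single_same, one_mul]
  have hsumM : ∀ y : MatProd F n, p0 * y * p0 = ∑ j, ∑ b, ∑ b',
      ((W j)ᴴ * y j * W j) b b' • (X0 ⟨j, b⟩ * star (X0 ⟨j, b'⟩)) := by
    intro y
    have : ∀ j, ∑ b, ∑ b', ((W j)ᴴ * y j * W j) b b' • (X0 ⟨j, b⟩ * star (X0 ⟨j, b'⟩))
        = Pi.single j (W j * ((W j)ᴴ * y j * W j) * (W j)ᴴ) := by
      intro j
      have e : W j * ((W j)ᴴ * y j * W j) * (W j)ᴴ = ∑ b, ∑ b',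
          ((W j)ᴴ * y j * W j) b b' • (W j * Matrix.single b b' (1 : F) * (W j)ᴴ) := by
        conv_lhs => rw [matrix_eq_sum_single ((W j)ᴴ * y j * W j)]
        simp only [Matrix.mul_sum, Matrix.sum_mul]
        refine Finset.sum_congr rfl fun b _ => Finset.sum_congr rfl fun b' _ => ?_
        rw [← Matrix.smul_mul, ← Matrix.mul_smul, Matrix.smul_single, smul_eq_mul, mul_one]
      rw [e]
      have := map_sum (ι := κ j)
        (AddMonoidHom.single (fun j => Matrix (Fin (n j)) (Fin (n j)) F) j)
      simp only [AddMonoidHom.single_apply] at this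
      rw [this]
      refine Finset.sum_congr rfl fun b _ => ?_
      rw [this]
      refine Finset.sum_congr rfl fun b' _ => ?_
      rw [hXX2, Pi.single_smul]
    simp only [this]
    rw [Finset.univ_sum_single]
    funext j
    change W j * (W j)ᴴ * y j * (W j * (W j)ᴴ) = _
    simp only [Matrix.mul_assoc]
  have hp0 : p0 = ∑ x, X0 x * star (X0 x) := by
    have h1 := hsumM 1
    have h2 : p0 * 1 * p0 = p0 := by
      rw [mul_one]
      funext j
      change W j * (W j)ᴴ * (W j * (W j)ᴴ) = W j * (W j)ᴴ
      calc _ = W j * ((W j)ᴴ * W j) * (W j)ᴴ := by simp only [Matrix.mul_assoc]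
        _ = _ := by rw [hW1, Matrix.mul_one]
    rw [h2] at h1
    rw [h1, Fintype.sum_sigma]
    refine Finset.sum_congr rfl fun j _ => Finset.sum_congr rfl fun b _ => ?_
    rw [Finset.sum_eq_single b]
    · simp [hW1]
    · intro b' _ hb
      simp [hW1, hb.symm]
    · simp
  have hp : IsProjection (Θ p0) := by
    constructor
    · rw [← map_star]; congr 1
      funext j
      change star (W j * (W j)ᴴ) = W j * (W j)ᴴ
      rw [star_eq_conjTranspose]; simp
    · rw [← map_mul]; congr 1
      funext j
      change W j * (W j)ᴴ * (W j * (W j)ᴴ) = W j * (W j)ᴴ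
      calc _ = W j * ((W j)ᴴ * W j) * (W j)ᴴ := by simp only [Matrix.mul_assoc]
        _ = _ := by rw [hW1, Matrix.mul_one]
  refine ⟨Θ p0, hp, ?_, ⟨Θ (fun j => Y j * (W j)ᴴ), ?_⟩, Fintype.card J, ?_⟩
  · rw [← map_mul]; congr 1
    exact funext hW2
  · rw [← map_mul]; congr 1
    funext j
    change W j * (W j)ᴴ = a j * (Y j * (W j)ᴴ)
    rw [← Matrix.mul_assoc, ← hWY]
  intro h hh hpos
  have hpX : Θ p0 = ∑ x, Θ (X0 x) * star (Θ (X0 x)) := by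
    rw [hp0, map_sum]
    exact Finset.sum_congr rfl fun x _ => by rw [map_mul, map_star]
  obtain ⟨K, c, h1, h2, h3, h4⟩ := frame_of_system (F := F) C hh hpos (fun x : J => x.1)
    (fun x => Θ (X0 x)) (fun j => Θ (P0 j))
    (by
      intro j
      constructor
      · rw [← map_star]; congr 1
        change star (Pi.single (M := fun j => Matrix (Fin (n j)) (Fin (n j)) F) j (Matrix.single (o j) (o j) (1 : F))) = Pi.single j _
        rw [← Pi.single_star, star_eq_conjTranspose]; simp
      · rw [← map_mul]; congr 1
        change Pi.single j _ * Pi.single j _ = Pi.single j _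
        rw [← Pi.single_mul, Matrix.single_mul_single_same, one_mul])
    (by intro x; rw [← map_star, ← map_mul, hXX1])
    (by intro x y hxy; rw [← map_star, ← map_mul, hXX x y hxy, map_zero])
  rw [← hpX] at h2 h3
  refine ⟨K, c, h1, h2, h3, ?_⟩
  intro y
  set D := fsum (Finset.range K) c with hD
  have hpD : Θ p0 * D = D := fsum_le h2
  have hDp : D * Θ p0 = D := hp.comm_of_le (h1.proj C.proper hh) hpD
  have e1 : D * Θ y * D = D * Θ (p0 * y * p0) * D := by
    rw [map_mul, map_mul]
    calc D * Θ y * D = (D * Θ p0) * Θ y * (Θ p0 * D) := by rw [hDp, hpD]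
      _ = _ := by simp only [mul_assoc]
  rw [e1, hsumM]
  simp only [map_sum, Finset.mul_sum, Finset.sum_mul]
  refine Submodule.sum_mem _ fun j _ => Submodule.sum_mem _ fun b _ =>
    Submodule.sum_mem _ fun b' _ => ?_
  rw [map_smul, mul_smul_comm, smul_mul_assoc, map_mul, map_star]
  exact Submodule.smul_mem _ _ (h4 ⟨j, b⟩ ⟨j, b'⟩ rfl)

end MatSys

section Shift
variable {F : Type} [Field F] [StarRing F] {Q : Type} [Ring Q] [Algebra F Q] [StarRing Q]
  {N : Q → ℝ}

theorem frame_shift (C : Ctx2 Q N) {e h p : Q} (he : IsProjection e) (hh : IsProjection h)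
    (hp : IsProjection p) (m : ℕ) (hm : N e = (2 ^ m : ℕ) * N h) (K : ℕ) (c : ℕ → Q)
    (H : FrameOn h (Finset.range K) c) (hpc : ∀ i ∈ Finset.range K, p * c i = c i) {δ : ℝ}
    (hδ : 0 ≤ δ)
    (h1 : N (p - fsum (Finset.range K) c) ≤ δ) (h2 : N ((1 - e) * p) ≤ δ) (h3 : N p ≤ N e + δ)
    (h4 : N e ≤ N p + δ) :
    ∃ c' : ℕ → Q, FrameOn h (Finset.range (2 ^ m)) c' ∧
      (∀ i ∈ Finset.range (2 ^ m), e * c' i = c' i) ∧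
      fsum (Finset.range (2 ^ m)) c' = e ∧
      ∀ z, fsum (Finset.range K) c * z * fsum (Finset.range K) c ∈ spn F K c →
        ∀ y, e * y * e = y → N (y - z) ≤ δ → ∃ y' ∈ spn F (2 ^ m) c', N (y - y') ≤ 11 * δ := by
  have hR := C.rank.1
  have hP := C.proper
  set D := fsum (Finset.range K) c with hD
  set r := min K (2 ^ m) with hr
  have hsub : Finset.range r ⊆ Finset.range K := Finset.range_subset_range.2 (min_le_left _ _)
  have H' := H.mono hsub
  set D' := fsum (Finset.range r) c with hD'
  have pD := H.proj hP hh
  have pD' := H'.proj hP hh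
  have hDD' : D * D' = D' := fsum_le fun i hi => H.fsum_mul hP hh (hsub hi)
  have hD'D : D' * D = D' := pD.comm_of_le pD' hDD'
  have hpD : p * D = D := fsum_le hpc
  have hpD' : p * D' = D' := by rw [← hDD', ← mul_assoc, hpD]
  have rD := H.rank hR hP hh
  have rD' := H'.rank hR hP hh
  rw [Finset.card_range] at rD rD'
  rw [← hD] at rD pD
  rw [← hD'] at rD' pD'
  rw [rank_sub_proj hR hp pD hpD] at h1
  have n0 := hR.nonneg h
  have hD'e : N D' ≤ N e := by
    rw [rD', hm]
    refine mul_le_mul_of_nonneg_right ?_ n0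
    exact_mod_cast min_le_right _ _
  have hNDD' : N D - N D' ≤ δ := by
    rcases le_total K (2 ^ m) with hle | hle
    · have : r = K := min_eq_left hle
      rw [rD, rD', this]; linarith
    · have : r = 2 ^ m := min_eq_right hle
      have h5 : N D' = N e := by rw [rD', hm, this]
      have := hR.nonneg (p - D)
      rw [rank_sub_proj hR hp pD hpD] at this
      linarith
  obtain ⟨q, hq, hDq, heq, hqN⟩ := C.cut pD' (1 - e)
  have heq' : e * q = q := by
    rw [sub_mul, one_mul, sub_eq_zero] at heq; exact heq.symm
  have hqN' : N (D' - q) ≤ δ := by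
    refine hqN.trans ?_
    rw [← hpD', ← mul_assoc]
    exact (hR.mul_le_left _ _).trans h2
  have hqe := he.comm_of_le hq heq'
  have hqD := pD'.comm_of_le hq hDq
  have r1 := rank_sub_proj hR pD' hq hDq
  have r2 := rank_sub_proj hR he hq heq'
  obtain ⟨w0, hw0, hw0i, hw0e⟩ := C.compar (pD'.sub hq hDq) (he.sub hq heq')
    (by rw [r1, r2]; linarith)
  have hqw0 : q * w0 = 0 := by
    rw [← hw0e, ← mul_assoc, mul_sub, hqe, hq.idem, sub_self, zero_mul]
  have hew0 : e * w0 = w0 := by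
    calc e * w0 = e * ((e - q) * w0) := by rw [hw0e]
      _ = (e - q) * w0 := by rw [← mul_assoc, mul_sub, he.idem, heq']
      _ = w0 := hw0e
  set w := q + w0 with hw
  have hww : star w * w = D' := by
    rw [hw, star_mul_add (by rw [hq.sa, hqw0]), hw0i, hq.sa, hq.idem]; abel
  have hew : e * w = w := by rw [hw, mul_add, heq', hew0]
  have hwP : PIso w := PIso.of_ini hP (by rw [hww]; exact pD')
  have hwD : w * D' = w := by rw [← hww]; exact hwP.mul_ini
  have hDw : D' * star w = star w := by
    have := congrArg star hwD
    rwa [star_mul, pD'.sa] at this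
  have hwe : N (e - w) ≤ 5 * δ := by
    have : e - w = (e - q) - w0 := by rw [hw]; abel
    rw [this]
    have t1 := hR.sub_le (e - q) w0
    have t2 := (rank_piso hR hw0).2
    rw [hw0i] at t2
    linarith
  -- the new frame
  have HF : FrameOn h (Finset.range r) (fun i => w * c i) := by
    have : ∀ i ∈ Finset.range r, ∀ j ∈ Finset.range r,
        star (w * c i) * (w * c j) = star (c i) * c j := by
      intro i hi j hj
      rw [star_mul, mul_assoc, ← mul_assoc (star w), hww, H'.fsum_mul hP hh hj]
    exact ⟨fun i hi => by rw [this i hi i hi]; exact H'.1 i hi,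
      fun i hi j hj hij => by rw [this i hi j hj]; exact H'.2 i hi j hj hij⟩
  obtain ⟨c', g1, g2, g3⟩ := C.fill hh he (Finset.range r) (Finset.Ico r (2 ^ m))
    (by
      rw [Finset.disjoint_left]; intro x hx hx'
      simp at hx hx'; omega)
    (fun i => w * c i) HF (fun i _ => by rw [← mul_assoc, hew])
    (by
      rw [Finset.card_range, Nat.card_Ico, hm]
      have : r + (2 ^ m - r) = 2 ^ m := by have := min_le_right K (2 ^ m); omega
      rw [this])
  have hun : Finset.range r ∪ Finset.Ico r (2 ^ m) = Finset.range (2 ^ m) := by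
    ext x
    have := min_le_right K (2 ^ m)
    simp; omega
  rw [hun] at g2 g3
  refine ⟨c', g2, g3, ?_, ?_⟩
  · have s1 := rank_sub_proj hR he (g2.proj hP hh) (fsum_le g3)
    rw [g2.rank hR hP hh, Finset.card_range, hm, sub_self] at s1
    exact (sub_eq_zero.1 (C.rank.2 _ s1)).symm
  · intro z hz y hy hyz
    refine ⟨w * z * star w, ?_, ?_⟩
    · have e1 : w * z * star w = w * (D' * (D * z * D) * D') * star w := by
        calc w * z * star w = (w * D') * z * (D' * star w) := by rw [hwD, hDw]
          _ = w * ((D' * D) * z * (D * D')) * star w := by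
            rw [hDD', hD'D]; simp only [mul_assoc]
          _ = _ := by simp only [mul_assoc]
      rw [e1]
      generalize D * z * D = x at hz
      unfold spn at hz
      induction hz using Submodule.span_induction with
      | zero => simp
      | add a b _ _ ha hb =>
        simp only [mul_add, add_mul]; exact Submodule.add_mem _ ha hb
      | smul t a _ ha =>
        simp only [mul_smul_comm, smul_mul_assoc]; exact Submodule.smul_mem _ _ ha
      | mem a ha =>
        obtain ⟨i, j, hi, hj, rfl⟩ := ha
        have hkill : ∀ i, i < K → r ≤ i → D' * c i = 0 := by
          intro i hi hri
          rw [hD', fsum, Finset.sum_mul]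
          refine Finset.sum_eq_zero fun l hl => ?_
          have hl' := Finset.mem_range.1 hl
          rw [mul_assoc, H.2 l (hsub hl) i (Finset.mem_range.2 hi) (by omega), mul_zero]
        have e2 : w * (D' * (c i * star (c j)) * D') * star w
            = w * (D' * c i) * star (w * (D' * c j)) := by
          simp only [star_mul, pD'.sa, mul_assoc]
        rw [e2]
        by_cases hir : i < r
        · by_cases hjr : j < r
          · rw [H'.fsum_mul hP hh (Finset.mem_range.2 hir),
              H'.fsum_mul hP hh (Finset.mem_range.2 hjr)]
            refine Submodule.subset_span ⟨i, j, ?_, ?_, ?_⟩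
            · exact lt_of_lt_of_le hir (min_le_right _ _)
            · exact lt_of_lt_of_le hjr (min_le_right _ _)
            · rw [g1 i (Finset.mem_range.2 hir), g1 j (Finset.mem_range.2 hjr)]
          · rw [hkill j hj (by omega)]; simp
        · rw [hkill i hi (by omega)]; simp
    · have e1 : y - w * z * star w
          = (e - w) * (y * e) + w * (y - z) * e + w * z * star (e - w) := by
        rw [star_sub, he.sa]
        nth_rewrite 1 [← hy]
        noncomm_ring
      rw [e1]
      have t1 := hR.subadditive ((e - w) * (y * e) + w * (y - z) * e) (w * z * star (e - w))
      have t2 := hR.subadditive ((e - w) * (y * e)) (w * (y - z) * e)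
      have t3 := hR.mul_le_left (e - w) (y * e)
      have t4 := hR.mul_mul_le w (y - z) e
      have t5 := hR.mul_le_right (w * z) (star (e - w))
      rw [C.rank_star] at t5
      linarith

theorem corner_step (hF : PosDefStar F) (hpy : StarPythagorean F) (C : Ctx2 Q N)
    (hL : LocApprox F N) {e : Q} (he : IsProjection e) (hepos : 0 < N e)
    {l : ℕ} (y : Fin l → Q) (hy : ∀ i, e * y i * e = y i) {ε : ℝ} (hε : 0 < ε) :
    ∃ m : ℕ, 1 ≤ m ∧ ∃ (h : Q) (c : ℕ → Q), IsProjection h ∧ N e = (2 ^ m : ℕ) * N h ∧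
      FrameOn h (Finset.range (2 ^ m)) c ∧ fsum (Finset.range (2 ^ m)) c = e ∧
      ∀ i, ∃ y' ∈ spn F (2 ^ m) c, N (y i - y') < ε := by
  have hR := C.rank.1
  set δ := ε / 12 with hδ
  have hδ0 : 0 < δ := by positivity
  obtain ⟨k, n, hn, Θ, z, hz⟩ := hL δ hδ0 (l + 1) (Fin.cons e y)
  have hze : N (e - Θ (z 0)) < δ := hz 0
  have hzy : ∀ i : Fin l, N (y i - Θ (z i.succ)) < δ := fun i => hz i.succ
  obtain ⟨p, hp, hpa, ⟨u, hpu⟩, M, hM⟩ := frame_of_matprod hF hpy C hn Θ (z 0)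
  set a := Θ (z 0) with ha
  have hNpa : N p = N a := by
    apply le_antisymm
    · rw [hpu]; exact hR.mul_le_left _ _
    · rw [← hpa]; exact hR.mul_le_left _ _
  have b1 : N a ≤ N e + δ := by
    have := hR.sub_le e (e - a)
    rw [sub_sub_cancel] at this; linarith
  have b2 : N e ≤ N a + δ := by
    have := hR.subadditive (e - a) a
    rw [sub_add_cancel] at this; linarith
  have b3 : N ((1 - e) * p) ≤ δ := by
    have : (1 - e) * p = -((1 - e) * (e - a) * u) := by
      rw [hpu, mul_sub _ e, sub_mul 1 e e, one_mul, he.idem, sub_self, zero_sub]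
      noncomm_ring
    rw [this, hR.neg]
    exact (hR.mul_mul_le _ _ _).trans hze.le
  obtain ⟨m0, hm0⟩ := pow_unbounded_of_one_lt ((M : ℝ) * N e / δ) (by norm_num : (1:ℝ) < 2)
  obtain ⟨h, hh, -, hNh⟩ := C.halve_pow he (m0 + 1)
  have hp2 : (0:ℝ) < 2 ^ (m0 + 1) := by positivity
  have hNh' : N e = (2 ^ (m0 + 1) : ℕ) * N h := by
    rw [hNh]; push_cast; field_simp
  have hpos : 0 < N h := by rw [hNh]; positivity
  obtain ⟨K, c, h1, h2, h3, h4⟩ := hM h hh hpos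
  have h3' : N (p - fsum (Finset.range K) c) ≤ δ := by
    refine h3.trans ?_
    rw [hNh, ← mul_div_assoc, div_le_iff₀ hp2]
    rw [div_lt_iff₀ hδ0] at hm0
    have : (2:ℝ) ^ m0 ≤ 2 ^ (m0 + 1) := pow_le_pow_right₀ (by norm_num) (by omega)
    nlinarith
  obtain ⟨c', g1, g2, g3, g4⟩ := frame_shift (F := F) C he hh hp (m0 + 1) hNh' K c h1 h2 hδ0.le h3'
    b3 (by rw [hNpa]; exact b1) (by rw [hNpa]; exact b2)
  refine ⟨m0 + 1, by omega, h, c', hh, hNh', g1, g3, fun i => ?_⟩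
  obtain ⟨y', hy', hN⟩ := g4 _ (h4 (z i.succ)) (y i) (hy i) (hzy i).le
  exact ⟨y', hy', by linarith⟩

end Shift

/-! ### Systems of matrix units and the tower -/

section MUsec
variable {F : Type} [Field F] [StarRing F] {Q : Type} [Ring Q] [Algebra F Q] [StarRing Q]
  {N : Q → ℝ}

/-- A self-adjoint system of `2^n × 2^n` matrix units. -/
structure MU (n : ℕ) (u : ℕ → ℕ → Q) : Prop where
  st : ∀ a b, star (u a b) = u b a
  same : ∀ a b d, b < 2 ^ n → u a b * u b d = u a d
  ne : ∀ a b c d, b ≠ c → u a b * u c d = 0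
  sum : ∑ a ∈ Finset.range (2 ^ n), u a a = 1
  out : ∀ a b, 2 ^ n ≤ a → u a b = 0

theorem MU.out' {n : ℕ} {u : ℕ → ℕ → Q} (h : MU n u) (a b : ℕ) (hb : 2 ^ n ≤ b) : u a b = 0 := by
  rw [← h.st, h.out b a hb, star_zero]

/-- One-step restriction. -/
def red1 (u : ℕ → ℕ → Q) : ℕ → ℕ → Q :=
  fun a b => u (2 * a) (2 * b) + u (2 * a + 1) (2 * b + 1)

/-- Iterated restriction. -/
def res (d : ℕ) (u : ℕ → ℕ → Q) : ℕ → ℕ → Q := red1^[d] u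

theorem res_add (d d' : ℕ) (u : ℕ → ℕ → Q) : res (d + d') u = res d (res d' u) :=
  Function.iterate_add_apply _ _ _ _

theorem res_succ (d : ℕ) (u : ℕ → ℕ → Q) : res (d + 1) u = red1 (res d u) :=
  Function.iterate_succ_apply' _ _ _

theorem res_eq (d : ℕ) (u : ℕ → ℕ → Q) : ∀ a b, res d u a b
    = ∑ s ∈ Finset.range (2 ^ d), u (a * 2 ^ d + s) (b * 2 ^ d + s) := by
  induction d with
  | zero => intro a b; simp [res]
  | succ d ih =>
    intro a b
    rw [res_succ, red1, ih, ih, pow_succ, mul_two, Finset.sum_range_add]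
    congr 1
    · refine Finset.sum_congr rfl fun s _ => ?_
      congr 1 <;> ring
    · refine Finset.sum_congr rfl fun s _ => ?_
      congr 1 <;> ring

theorem sum_range_two_mul (k : ℕ) (f : ℕ → Q) :
    ∑ i ∈ Finset.range (2 * k), f i = ∑ i ∈ Finset.range k, (f (2 * i) + f (2 * i + 1)) := by
  induction k with
  | zero => simp
  | succ k ih =>
    rw [mul_add, mul_one, Finset.sum_range_succ, Finset.sum_range_succ, ih,
      Finset.sum_range_succ, add_assoc]

theorem sum_red1 (n : ℕ) (u : ℕ → ℕ → Q) :
    ∑ a ∈ Finset.range (2 ^ n), red1 u a a = ∑ a ∈ Finset.range (2 ^ (n + 1)), u a a := by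
  rw [pow_succ, mul_comm, sum_range_two_mul]; rfl

theorem sum_res (n d : ℕ) (u : ℕ → ℕ → Q) :
    ∑ a ∈ Finset.range (2 ^ n), res d u a a = ∑ a ∈ Finset.range (2 ^ (n + d)), u a a := by
  induction d generalizing n with
  | zero => rfl
  | succ d ih => rw [res_succ, sum_red1, ih, add_right_comm, add_assoc]

theorem MU.red1 {n : ℕ} {u : ℕ → ℕ → Q} (h : MU (n + 1) u) : MU n (red1 u) where
  st a b := by simp only [AraClaramunt.red1, star_add, h.st]
  same a b d hb := by
    have h2 : 2 * b + 1 < 2 ^ (n + 1) := by rw [pow_succ]; omega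
    simp only [AraClaramunt.red1, add_mul, mul_add]
    rw [h.same _ (2 * b) _ (by omega), h.same _ _ _ h2, h.ne _ _ _ _ (by omega),
      h.ne _ _ _ _ (by omega)]
    simp
  ne a b c d hbc := by
    simp only [AraClaramunt.red1, add_mul, mul_add]
    rw [h.ne _ _ _ _ (by omega), h.ne _ _ _ _ (by omega), h.ne _ _ _ _ (by omega),
      h.ne _ _ _ _ (by omega)]
    simp
  sum := by rw [sum_red1, h.sum]
  out a b ha := by
    simp only [AraClaramunt.red1]
    have : 2 ^ (n + 1) ≤ 2 * a := by rw [pow_succ]; omega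
    rw [h.out _ _ this, h.out _ _ (by omega), add_zero]

theorem MU.res {n d : ℕ} {u : ℕ → ℕ → Q} (h : MU (n + d) u) : MU n (res d u) := by
  induction d generalizing n with
  | zero => exact h
  | succ d ih =>
    rw [res_succ]
    apply MU.red1
    apply ih
    rwa [add_right_comm, add_assoc]

/-- Span of the matrix units. -/
def uspan (F : Type) [Field F] {Q : Type} [Ring Q] [Algebra F Q] (u : ℕ → ℕ → Q) :
    Submodule F Q := Submodule.span F {x | ∃ a b, x = u a b}

theorem MU.pos (hR : IsPseudoRankFunction N) (hR0 : ∀ x, N x = 0 → x = 0) {n : ℕ}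
    {u : ℕ → ℕ → Q} (h : MU n u) : 0 < N (u 0 0) := by
  refine lt_of_le_of_ne (hR.nonneg _) fun h0 => ?_
  have h1 := hR0 _ h0.symm
  have h2 : (1 : Q) = 0 := by
    rw [← h.sum]
    refine Finset.sum_eq_zero fun a _ => ?_
    have p : 0 < 2 ^ n := by positivity
    rw [← h.same a 0 a p, ← h.same a 0 0 p, h1]; simp
  have h3 := hR.map_one
  rw [h2, hR.zero] at h3
  exact zero_ne_one h3

theorem mu_step (hF : PosDefStar F) (hpy : StarPythagorean F) (C : Ctx2 Q N)
    (hL : LocApprox F N) {n : ℕ} {u : ℕ → ℕ → Q} (h : MU n u) {l : ℕ} (x : Fin l → Q) {ε : ℝ}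
    (hε : 0 < ε) : ∃ m, 1 ≤ m ∧ ∃ u', MU (n + m) u' ∧ res m u' = u ∧
      ∀ i, ∃ z ∈ uspan F u', N (x i - z) < ε := by
  classical
  have hR := C.rank.1
  have p0 : 0 < 2 ^ n := by positivity
  have he : IsProjection (u 0 0) := ⟨h.st 0 0, h.same 0 0 0 p0⟩
  have hpos := h.pos hR C.rank.2
  let I := Fin l × Fin (2 ^ n) × Fin (2 ^ n)
  let σ : I ≃ Fin (Fintype.card I) := Fintype.equivFin I
  let y : I → Q := fun t => u 0 t.2.1 * x t.1 * u t.2.2 0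
  have hy : ∀ t, u 0 0 * y t * u 0 0 = y t := by
    intro t
    calc u 0 0 * y t * u 0 0 = (u 0 0 * u 0 t.2.1) * x t.1 * (u t.2.2 0 * u 0 0) := by
          simp only [y, mul_assoc]
      _ = y t := by rw [h.same _ _ _ p0, h.same _ _ _ p0]
  have hε' : 0 < ε / (2 ^ n * 2 ^ n) := by positivity
  obtain ⟨m, hm, g, c, hg, -, Hc, hce, happ⟩ := corner_step hF hpy C hL he hpos
    (fun i => y (σ.symm i)) (fun i => hy _) hε'
  set M := 2 ^ m with hM
  have hM0 : 0 < M := by positivity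
  have hec : ∀ s, s < M → u 0 0 * c s = c s := fun s hs => by
    rw [← hce]; exact Hc.fsum_mul C.proper hg (Finset.mem_range.2 hs)
  have hce' : ∀ s, s < M → star (c s) * u 0 0 = star (c s) := fun s hs => by
    rw [← hce]; exact Hc.star_fsum C.proper hg (Finset.mem_range.2 hs)
  let u' : ℕ → ℕ → Q := fun a b => u (a / M) 0 * (c (a % M) * star (c (b % M))) * u 0 (b / M)
  have hu' : ∀ a b s t, s < M → t < M → u' (a * M + s) (b * M + t)
      = u a 0 * (c s * star (c t)) * u 0 b := by
    intro a b s t hs ht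
    simp only [u']
    rw [show (a * M + s) / M = a by
        rw [mul_comm, Nat.mul_add_div hM0, Nat.div_eq_of_lt hs, add_zero],
      show (b * M + t) / M = b by
        rw [mul_comm, Nat.mul_add_div hM0, Nat.div_eq_of_lt ht, add_zero],
      show (a * M + s) % M = s by
        rw [mul_comm, Nat.mul_add_mod, Nat.mod_eq_of_lt hs],
      show (b * M + t) % M = t by
        rw [mul_comm, Nat.mul_add_mod, Nat.mod_eq_of_lt ht]]
  have hres : res m u' = u := by
    funext a b
    rw [res_eq, ← hM]
    have : ∀ s ∈ Finset.range M, u' (a * M + s) (b * M + s)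
        = u a 0 * (c s * star (c s)) * u 0 b := fun s hs =>
      hu' a b s s (Finset.mem_range.1 hs) (Finset.mem_range.1 hs)
    rw [Finset.sum_congr rfl this, ← Finset.sum_mul, ← Finset.mul_sum]
    change u a 0 * fsum (Finset.range M) c * u 0 b = _
    rw [hce, h.same _ _ _ p0, h.same _ _ _ p0]
  have hprod : ∀ a b b' d, b / M = b' / M → b / M < 2 ^ n → u' a b * u' b' d
      = u (a / M) 0 * (c (a % M) * (star (c (b % M)) * c (b' % M)) * star (c (d % M)))
        * u 0 (d / M) := by
    intro a b b' d hbb hb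
    simp only [u']
    rw [← hbb]
    calc _ = u (a / M) 0 * (c (a % M) * star (c (b % M))) * (u 0 (b / M) * u (b / M) 0) *
          ((c (b' % M) * star (c (d % M))) * u 0 (d / M)) := by simp only [mul_assoc]
      _ = u (a / M) 0 * (c (a % M) * (star (c (b % M)) * u 0 0)) *
          ((c (b' % M) * star (c (d % M))) * u 0 (d / M)) := by
          rw [h.same _ _ _ hb]; simp only [mul_assoc]
      _ = _ := by rw [hce' _ (Nat.mod_lt _ hM0)]; simp only [mul_assoc]
  refine ⟨m, hm, u', ?_, hres, ?_⟩
  · constructor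
    · intro a b
      simp only [u', star_mul, h.st, star_star, mul_assoc]
    · intro a b d hb
      have hb' : b / M < 2 ^ n := by
        rw [Nat.div_lt_iff_lt_mul hM0]; rwa [hM, ← pow_add]
      rw [hprod a b b d rfl hb', Hc.1 _ (Finset.mem_range.2 (Nat.mod_lt _ hM0)),
        Hc.mul_h C.proper hg (Finset.mem_range.2 (Nat.mod_lt _ hM0))]
    · intro a b b' d hbb
      by_cases h1 : b / M = b' / M
      · by_cases hb : b / M < 2 ^ n
        · rw [hprod a b b' d h1 hb, Hc.2 _ (Finset.mem_range.2 (Nat.mod_lt _ hM0)) _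
            (Finset.mem_range.2 (Nat.mod_lt _ hM0))]
          · simp
          · intro h2
            apply hbb
            rw [← Nat.div_add_mod b M, ← Nat.div_add_mod b' M, h1, h2]
        · simp only [u']
          rw [h.out' 0 (b / M) (by omega)]; simp
      · simp only [u']
        calc _ = u (a / M) 0 * (c (a % M) * star (c (b % M))) * (u 0 (b / M) * u (b' / M) 0) *
          ((c (b' % M) * star (c (d % M))) * u 0 (d / M)) := by simp only [mul_assoc]
          _ = 0 := by rw [h.ne _ _ _ _ h1]; simp
    · rw [← sum_res, hres, h.sum]
    · intro a b ha
      have : 2 ^ n ≤ a / M := by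
        rw [Nat.le_div_iff_mul_le hM0]; rwa [hM, ← pow_add]
      simp only [u']
      rw [h.out _ _ this]; simp
  · intro i
    have : ∀ t : I, ∃ y' ∈ spn F M c, N (y t - y') < ε / (2 ^ n * 2 ^ n) := by
      intro t
      have := happ (σ t)
      simpa using this
    choose y' hy' hyN using this
    refine ⟨∑ a : Fin (2 ^ n), ∑ b : Fin (2 ^ n), u a 0 * y' (i, a, b) * u 0 b, ?_, ?_⟩
    · refine Submodule.sum_mem _ fun a _ => Submodule.sum_mem _ fun b _ => ?_
      have hz := hy' (i, a, b)
      generalize y' (i, a, b) = z at hz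
      unfold spn at hz
      induction hz using Submodule.span_induction with
      | zero => simp
      | add a b _ _ ha hb =>
        simp only [mul_add, add_mul]; exact Submodule.add_mem _ ha hb
      | smul t a _ ha =>
        simp only [mul_smul_comm, smul_mul_assoc]; exact Submodule.smul_mem _ _ ha
      | mem w hw =>
        obtain ⟨s, t, hs, ht, rfl⟩ := hw
        exact Submodule.subset_span ⟨_, _, (hu' a b s t hs ht).symm⟩
    · have hx : x i = ∑ a : Fin (2 ^ n), ∑ b : Fin (2 ^ n), u a 0 * y (i, a, b) * u 0 b := by
        have h1 : ∑ a : Fin (2 ^ n), u a a = 1 := by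
          rw [← h.sum, Finset.sum_range]
        calc x i = (∑ a : Fin (2 ^ n), u a a) * x i * ∑ b : Fin (2 ^ n), u b b := by
              rw [h1]; simp
          _ = _ := by
            rw [Finset.sum_mul, Finset.sum_mul]
            refine Finset.sum_congr rfl fun a _ => ?_
            rw [Finset.mul_sum]
            refine Finset.sum_congr rfl fun b _ => ?_
            simp only [y]
            rw [← h.same a 0 a p0, ← h.same b 0 b p0]
            simp only [mul_assoc]
      rw [hx, ← Finset.sum_sub_distrib]
      simp only [← Finset.sum_sub_distrib]
      have hb : ∀ a b : Fin (2 ^ n), N (u a 0 * y (i, a, b) * u 0 b - u a 0 * y' (i, a, b) * u 0 b)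
          < ε / (2 ^ n * 2 ^ n) := by
        intro a b
        rw [← sub_mul, ← mul_sub]
        exact (hR.mul_mul_le _ _ _).trans_lt (hyN _)
      have : Nonempty (Fin (2 ^ n)) := ⟨⟨0, p0⟩⟩
      calc _ ≤ ∑ a : Fin (2 ^ n), ∑ b : Fin (2 ^ n),
            N (u a 0 * y (i, a, b) * u 0 b - u a 0 * y' (i, a, b) * u 0 b) :=
            (hR.sum_le _ _).trans (Finset.sum_le_sum fun a _ => hR.sum_le _ _)
        _ < ∑ a : Fin (2 ^ n), ∑ b : Fin (2 ^ n), ε / (2 ^ n * 2 ^ n) :=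
            Finset.sum_lt_sum_of_nonempty Finset.univ_nonempty fun a _ =>
              Finset.sum_lt_sum_of_nonempty Finset.univ_nonempty fun b _ => hb a b
        _ = ε := by
            simp
            field_simp

theorem exists_tower (hF : PosDefStar F) (hpy : StarPythagorean F) (C : Ctx2 Q N)
    (hL : LocApprox F N) (b : ℕ → Q) : ∃ e : ℕ → ℕ → ℕ → Q, (∀ n, MU n (e n)) ∧
      (∀ n, red1 (e (n + 1)) = e n) ∧
      ∀ i, ∀ ε : ℝ, 0 < ε → ∃ n, ∃ z ∈ uspan F (e n), N (b i - z) < ε := by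
  obtain ⟨f, hf, hr⟩ := exists_seq_rel (α := ℕ × (ℕ → ℕ → Q))
    (fun k p => MU p.1 p.2 ∧ k ≤ p.1 ∧ ∀ i, i < k → ∃ z ∈ uspan F p.2,
      N (b i - z) < 1 / ((k : ℝ) + 1))
    (fun _ p q => ∃ d, q.1 = p.1 + d ∧ res d q.2 = p.2)
    (by
      refine ⟨(0, fun a b => if a = 0 ∧ b = 0 then 1 else 0), ⟨?_, ?_, ?_, ?_, ?_⟩, le_rfl, by simp⟩
      · intro a b; by_cases ha : a = 0 <;> by_cases hb : b = 0 <;> simp [ha, hb]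
      · intro a b d hb
        have : b = 0 := by simpa using hb
        subst this
        by_cases ha : a = 0 <;> by_cases hd : d = 0 <;> simp [ha, hd]
      · intro a b c d hbc
        by_cases hb : b = 0
        · have : c ≠ 0 := fun h => hbc (by rw [hb, h])
          simp [this]
        · simp [hb]
      · simp
      · intro a b ha
        have : a ≠ 0 := by intro h; rw [h] at ha; simp at ha
        simp [this])
    (by
      rintro k ⟨m, u⟩ ⟨h1, h2, h3⟩
      obtain ⟨d, hd, u', g1, g2, g3⟩ := mu_step hF hpy C hL h1 (fun i : Fin (k + 1) => b i)
        (ε := 1 / (((k + 1 : ℕ) : ℝ) + 1)) (by positivity)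
      refine ⟨(m + d, u'), ⟨g1, ?_, fun i hi => g3 ⟨i, hi⟩⟩, d, rfl, g2⟩
      change k + 1 ≤ m + d
      change k ≤ m at h2
      omega)
  have hmon : ∀ k j, ∃ d, (f (k + j)).1 = (f k).1 + d ∧ res d (f (k + j)).2 = (f k).2 := by
    intro k j
    induction j with
    | zero => exact ⟨0, rfl, rfl⟩
    | succ j ih =>
      obtain ⟨d, h1, h2⟩ := ih
      obtain ⟨d', h1', h2'⟩ := hr (k + j)
      refine ⟨d + d', ?_, ?_⟩
      · rw [← add_assoc k j 1, h1', h1, add_assoc]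
      · rw [res_add, ← add_assoc k j 1, h2', h2]
  refine ⟨fun n => res ((f n).1 - n) (f n).2, ?_, ?_, ?_⟩
  · intro n
    apply MU.res
    have := (hf n).2.1
    rw [Nat.add_sub_cancel' this]
    exact (hf n).1
  · intro n
    obtain ⟨d, h1, h2⟩ := hr n
    have h3 := (hf n).2.1
    have h4 := (hf (n + 1)).2.1
    change red1 (res ((f (n + 1)).1 - (n + 1)) (f (n + 1)).2) = res ((f n).1 - n) (f n).2
    rw [← res_succ, ← h2, ← res_add]
    congr 1
    omega
  · intro i ε hε
    obtain ⟨k0, hk0⟩ := exists_nat_one_div_lt hε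
    set k := max k0 (i + 1) with hk
    obtain ⟨z, hz, hzN⟩ := (hf k).2.2 i (lt_of_lt_of_le (Nat.lt_succ_self i) (le_max_right _ _))
    refine ⟨(f k).1, z, ?_, hzN.trans_le (le_trans ?_ hk0.le)⟩
    · obtain ⟨d, h1, h2⟩ := hmon k ((f k).1 - k)
      have h3 := (hf k).2.1
      rw [Nat.add_sub_cancel' h3] at h1 h2
      have : (f (f k).1).1 - (f k).1 = d := by omega
      change z ∈ uspan F (res ((f (f k).1).1 - (f k).1) (f (f k).1).2)
      rw [this, h2]
      exact hz
    · apply one_div_le_one_div_of_le (by positivity)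
      have : (k0 : ℝ) ≤ k := by exact_mod_cast le_max_left _ _
      linarith

end MUsec

/-! ### From the tower to `M_F` -/

section Tower
variable {F : Type} [Field F] [StarRing F] {Q : Type} [Ring Q] [Algebra F Q] [StarRing Q]
  [StarModule F Q] {N : Q → ℝ}

/-- The `*`-homomorphism attached to matrix units. -/
def muHom (F : Type) [Field F] [StarRing F] {Q : Type} [Ring Q] [Algebra F Q] [StarRing Q]
    [StarModule F Q] {n : ℕ} {u : ℕ → ℕ → Q} (h : MU n u) :
    Matrix (Fin (2 ^ n)) (Fin (2 ^ n)) F →⋆ₐ[F] Q where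
  toFun M := ∑ a, ∑ b, M a b • u a b
  map_one' := by
    rw [← h.sum, Finset.sum_range]
    refine Finset.sum_congr rfl fun a _ => ?_
    rw [Finset.sum_eq_single a]
    · simp
    · intro b _ hb; simp [hb.symm]
    · simp
  map_mul' M M' := by
    rw [Finset.sum_mul]
    refine Finset.sum_congr rfl fun a _ => ?_
    simp only [Matrix.mul_apply, Finset.sum_smul]
    rw [Finset.sum_comm, Finset.sum_mul]
    refine Finset.sum_congr rfl fun c _ => ?_
    symm
    rw [Finset.mul_sum, Finset.sum_eq_single c]
    · rw [Finset.mul_sum]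
      refine Finset.sum_congr rfl fun d _ => ?_
      rw [smul_mul_smul_comm, h.same _ _ _ c.2]
    · intro b _ hb
      rw [Finset.mul_sum]
      refine Finset.sum_eq_zero fun d _ => ?_
      rw [smul_mul_smul_comm, h.ne _ _ _ _ (fun hh => hb (Fin.ext hh.symm)), smul_zero]
    · simp
  map_zero' := by simp
  map_add' M M' := by simp [add_smul, Finset.sum_add_distrib]
  commutes' r := by
    rw [Algebra.algebraMap_eq_smul_one (A := Q) r, ← h.sum, Finset.sum_range, Finset.smul_sum]
    refine Finset.sum_congr rfl fun a _ => ?_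
    rw [Finset.sum_eq_single a]
    · simp [Matrix.algebraMap_matrix_apply]
    · intro b _ hb; simp [Matrix.algebraMap_matrix_apply, hb.symm]
    · simp
  map_star' M := by
    simp only [star_sum, star_smul, h.st, Matrix.star_apply]
    rw [Finset.sum_comm]

theorem muHom_apply {n : ℕ} {u : ℕ → ℕ → Q} (h : MU n u) (M : Matrix (Fin (2 ^ n)) (Fin (2 ^ n)) F) :
    muHom F h M = ∑ a, ∑ b, M a b • u a b := rfl

theorem muHom_inj (hR : IsPseudoRankFunction N) (hR0 : ∀ x, N x = 0 → x = 0) {n : ℕ}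
    {u : ℕ → ℕ → Q} (h : MU n u) : Function.Injective (muHom F h) := by
  rw [injective_iff_map_eq_zero]
  intro M hM
  ext a b
  have p0 : 0 < 2 ^ n := by positivity
  have h1 : u 0 a * muHom F h M * u b 0 = M a b • u 0 0 := by
    rw [muHom_apply, Finset.mul_sum, Finset.sum_mul, Finset.sum_eq_single a]
    · rw [Finset.mul_sum, Finset.sum_mul, Finset.sum_eq_single b]
      · rw [mul_smul_comm, smul_mul_assoc, h.same _ _ _ a.2, h.same _ _ _ b.2]
      · intro d _ hd
        rw [mul_smul_comm, smul_mul_assoc, mul_assoc, h.ne _ _ _ _ (fun hh => hd (Fin.ext hh))]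
        simp
      · simp
    · intro c _ hc
      rw [Finset.mul_sum, Finset.sum_mul]
      refine Finset.sum_eq_zero fun d _ => ?_
      rw [mul_smul_comm, smul_mul_assoc, h.ne _ _ _ _ (fun hh => hc (Fin.ext hh.symm))]
      simp
    · simp
  rw [hM, mul_zero, zero_mul] at h1
  by_contra hne
  have h2 : u 0 0 = 0 := by
    rcases smul_eq_zero.1 h1.symm with h3 | h3
    · exact absurd h3 hne
    · exact h3
  have h3 := h.pos hR hR0
  rw [h2, hR.zero] at h3
  exact lt_irrefl _ h3

theorem muHom_red {n : ℕ} {u : ℕ → ℕ → Q} {u' : ℕ → ℕ → Q} (h : MU n u) (h' : MU (n + 1) u')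
    (hr : red1 u' = u) (E : Fin (2 ^ n) × Fin 2 ≃ Fin (2 ^ (n + 1)))
    (hE : ∀ a t, (E (a, t) : ℕ) = 2 * a + t) (z : Matrix (Fin (2 ^ n)) (Fin (2 ^ n)) F) :
    muHom F h' (Matrix.reindex E E (Matrix.blockDiagonal fun _ : Fin 2 => z)) = muHom F h z := by
  rw [muHom_apply, muHom_apply, ← Equiv.sum_comp E, Fintype.sum_prod_type]
  refine Finset.sum_congr rfl fun a _ => ?_
  simp only [← Equiv.sum_comp E, Fintype.sum_prod_type]
  rw [Finset.sum_comm]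
  refine Finset.sum_congr rfl fun b _ => ?_
  simp [Fin.sum_univ_two, Matrix.blockDiagonal_apply, hE, ← hr, red1, smul_add]

theorem mf_of_tower (C : Ctx2 Q N) (b : ℕ → Q)
    (hb : RankDense N (Submodule.span F (Set.range b) : Set Q)) (e : ℕ → ℕ → ℕ → Q)
    (he : ∀ n, MU n (e n)) (hr : ∀ n, red1 (e (n + 1)) = e n)
    (happ : ∀ i, ∀ ε : ℝ, 0 < ε → ∃ n, ∃ z ∈ uspan F (e n), N (b i - z) < ε) :
    IsMFStarCompletion F Q N := by
  have hR := C.rank.1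
  have hinj : ∀ n, Function.Injective (muHom F (he n)) := fun n => muHom_inj hR C.rank.2 (he n)
  let E : (n : ℕ) → Fin (2 ^ n) × Fin 2 ≃ Fin (2 ^ (n + 1)) := fun n =>
    finProdFinEquiv.trans (finCongr (by rw [pow_succ]))
  have hE : ∀ n a t, (E n (a, t) : ℕ) = 2 * a + t := by
    intro n a t
    simp [E]; ring
  have hred := fun n z => muHom_red (F := F) (he n) (he (n + 1)) (hr n) (E n) (hE n) z
  have hA : ∀ n, (muHom F (he n)).range ≤ (muHom F (he (n + 1))).range := by
    rintro n _ ⟨z, rfl⟩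
    exact ⟨_, hred n z⟩
  have hmono : ∀ n m, n ≤ m → (muHom F (he n)).range ≤ (muHom F (he m)).range :=
    fun n m h => monotone_nat_of_le_succ hA h
  have husp : ∀ n, ∀ z ∈ uspan F (e n), z ∈ (muHom F (he n)).range := by
    intro n z hz
    unfold uspan at hz
    induction hz using Submodule.span_induction with
    | zero => exact zero_mem _
    | add a b _ _ ha hb => exact add_mem ha hb
    | smul t a _ ha => exact SMulMemClass.smul_mem t ha
    | mem x hx =>
      obtain ⟨a, c, rfl⟩ := hx
      by_cases ha : a < 2 ^ n
      · by_cases hc : c < 2 ^ n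
        · refine ⟨Matrix.single ⟨a, ha⟩ ⟨c, hc⟩ 1, ?_⟩
          change muHom F (he n) _ = _
          rw [muHom_apply, Finset.sum_eq_single ⟨a, ha⟩, Finset.sum_eq_single ⟨c, hc⟩]
          · simp
          · intro d _ hd; simp [Matrix.single, hd.symm]
          · simp
          · intro d _ hd
            refine Finset.sum_eq_zero fun x _ => ?_
            simp [Matrix.single, hd.symm]
          · simp
        · rw [(he n).out' _ _ (by omega)]; exact zero_mem _
      · rw [(he n).out _ _ (by omega)]; exact zero_mem _
  refine ⟨C.rank, C.rank_star, C.complete, fun n => (muHom F (he n)).range, hA,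
    fun n => (StarAlgEquiv.ofInjective _ (hinj n)).symm, ?_, ?_⟩
  · have key : ∀ y ∈ Submodule.span F (Set.range b), ∀ ε : ℝ, 0 < ε →
        ∃ n, ∃ z ∈ (muHom F (he n)).range, N (y - z) < ε := by
      intro y hy
      induction hy using Submodule.span_induction with
      | zero => intro ε hε; exact ⟨0, 0, zero_mem _, by rw [sub_zero, hR.zero]; exact hε⟩
      | add x y _ _ hx hy =>
        intro ε hε
        obtain ⟨n, z, hz, h1⟩ := hx (ε / 2) (by positivity)
        obtain ⟨m, w, hw, h2⟩ := hy (ε / 2) (by positivity)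
        refine ⟨max n m, z + w, add_mem (hmono _ _ (le_max_left _ _) hz)
          (hmono _ _ (le_max_right _ _) hw), ?_⟩
        have := hR.subadditive (x - z) (y - w)
        rw [add_sub_add_comm]
        linarith
      | smul t x _ hx =>
        intro ε hε
        obtain ⟨n, z, hz, h1⟩ := hx ε hε
        refine ⟨n, t • z, SMulMemClass.smul_mem t hz, ?_⟩
        rw [← smul_sub]
        exact (hR.smul_le _ _).trans_lt h1
      | mem x hx =>
        obtain ⟨i, rfl⟩ := hx
        intro ε hε
        obtain ⟨n, z, hz, h1⟩ := happ i ε hε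
        exact ⟨n, z, husp n z hz, h1⟩
    intro x ε hε
    obtain ⟨y, hy, h1⟩ := hb x (ε / 2) (by positivity)
    obtain ⟨n, z, hz, h2⟩ := key y hy (ε / 2) (by positivity)
    refine ⟨z, Set.mem_iUnion.2 ⟨n, hz⟩, ?_⟩
    have := hR.dist_triangle x y z
    linarith
  · intro n
    refine ⟨2, E n, fun z => ?_⟩
    change (StarAlgEquiv.ofInjective _ (hinj (n + 1))).symm _ = _
    rw [StarAlgEquiv.symm_apply_eq]
    apply Subtype.ext
    exact (hred n z).symm

theorem exists_seq_dense (Q₀ : StarSubalgebra F Q) (hdim : Module.rank F Q₀ ≤ Cardinal.aleph0)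
    (hdense : RankDense N (Q₀ : Set Q)) :
    ∃ b : ℕ → Q, RankDense N (Submodule.span F (Set.range b) : Set Q) := by
  let B := Module.Basis.ofVectorSpace F Q₀
  have hc : Countable (Module.Basis.ofVectorSpaceIndex F Q₀) := by
    rw [← Cardinal.mk_le_aleph0_iff, B.mk_eq_rank'']
    exact hdim
  let S : Set Q := insert 0 (Set.range fun i => ((B i : Q₀) : Q))
  have hS : S.Countable := (Set.countable_range _).insert 0
  obtain ⟨b, hb⟩ := hS.exists_eq_range ⟨0, Set.mem_insert _ _⟩
  refine ⟨b, ?_⟩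
  intro x ε hε
  obtain ⟨y, hy, h⟩ := hdense x ε hε
  refine ⟨y, ?_, h⟩
  rw [← hb]
  have h1 : (⟨y, hy⟩ : Q₀) ∈ Submodule.span F (Set.range B) := by
    rw [B.span_eq]; trivial
  have h2 := Submodule.mem_map_of_mem (f := Q₀.subtype.toAlgHom.toLinearMap) h1
  rw [Submodule.map_span] at h2
  refine Submodule.span_mono ?_ h2
  rintro _ ⟨_, ⟨i, rfl⟩, rfl⟩
  exact Or.inr ⟨i, rfl⟩

theorem mf_of_locApprox (hF : PosDefStar F) (hpy : StarPythagorean F) (C : Ctx2 Q N)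
    (hL : LocApprox F N)
    (Q₀ : StarSubalgebra F Q) (hdim : Module.rank F Q₀ ≤ Cardinal.aleph0)
    (hdense : RankDense N (Q₀ : Set Q)) : IsMFStarCompletion F Q N := by
  obtain ⟨b, hb⟩ := exists_seq_dense (N := N) Q₀ hdim hdense
  obtain ⟨e, he, hr, happ⟩ := exists_tower hF hpy C hL b
  exact mf_of_tower C b hb e he hr happ

end Tower

/-! ### Uniqueness of the pseudo-rank function of a matrix algebra -/

section Uniq
variable {F : Type} [Field F]

theorem rank_unit_mul {Q : Type*} [Ring Q] {N : Q → ℝ} (h : IsPseudoRankFunction N) {u v : Q}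
    (hu : IsUnit u) (hv : IsUnit v) (x : Q) : N (u * x * v) = N x := by
  refine le_antisymm (h.mul_mul_le _ _ _) ?_
  obtain ⟨u, rfl⟩ := hu
  obtain ⟨v, rfl⟩ := hv
  have h1 := h.mul_mul_le (↑u⁻¹ : Q) (u * x * v) (↑v⁻¹ : Q)
  have h2 : (↑u⁻¹ : Q) * (u * x * v) * (↑v⁻¹ : Q) = x := by
    rw [mul_assoc (u : Q), Units.inv_mul_cancel_left, Units.mul_inv_cancel_right]
  rwa [h2] at h1

/-- Diagonal projections. -/
def dg (F : Type) [Field F] {n : ℕ} (s : Finset (Fin n)) : Matrix (Fin n) (Fin n) F :=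
  Matrix.diagonal fun i => if i ∈ s then 1 else 0

theorem rank_dg {n : ℕ} {S : Matrix (Fin n) (Fin n) F → ℝ} (h : IsPseudoRankFunction S)
    (s : Finset (Fin n)) : S (dg F s) * n = s.card := by
  have hij : ∀ i j : Fin n, S (dg F {i}) ≤ S (dg F {j}) := by
    intro i j
    have h1 := h.mul_mul_le (Matrix.single i j (1 : F)) (dg F {j}) (Matrix.single j i (1 : F))
    have h2 : Matrix.single i j (1 : F) * (dg F {j}) * (Matrix.single j i (1 : F)) = dg F {i} := by
      have : ∀ k : Fin n, dg F {k} = Matrix.single k k 1 := by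
        intro k
        ext a b
        rw [dg, Matrix.diagonal_apply, Matrix.single_apply]
        by_cases hab : a = b
        · subst hab; simp [eq_comm]
        · rw [if_neg hab, if_neg]; rintro ⟨rfl, rfl⟩; exact hab rfl
      rw [this, this]; simp
    rwa [h2] at h1
  have hadd : ∀ c : ℝ, (∀ i, S (dg F {i}) = c) → ∀ s : Finset (Fin n), S (dg F s) = s.card * c := by
    intro c hc s
    induction s using Finset.induction_on with
    | empty =>
      have : dg F (∅ : Finset (Fin n)) = 0 := by simp [dg]
      rw [this, h.zero]; simp
    | insert a s ha ih =>
      have hsum : dg F (insert a s) = dg F {a} + dg F s := by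
        rw [dg, dg, dg, Matrix.diagonal_add]
        congr 1
        funext i
        by_cases hi : i = a
        · subst hi; simp [ha]
        · simp [hi]
      have hm : ∀ t t' : Finset (Fin n), dg F t * dg F t' = dg F (t ∩ t') := by
        intro t t'
        rw [dg, dg, dg, Matrix.diagonal_mul_diagonal]
        congr 1
        funext i
        by_cases h1 : i ∈ t <;> by_cases h2 : i ∈ t' <;> simp [h1, h2]
      have he : dg F (∅ : Finset (Fin n)) = 0 := by simp [dg]
      rw [hsum, h.add_of_orthogonal, ih, hc, Finset.card_insert_of_notMem ha]
      · push_cast; ring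
      · rw [IsIdempotentElem, hm, Finset.inter_self]
      · rw [IsIdempotentElem, hm, Finset.inter_self]
      · rw [hm, Finset.singleton_inter_of_notMem ha, he]
      · rw [hm, Finset.inter_singleton_of_notMem ha, he]
  rcases Nat.eq_zero_or_pos n with h0 | h0
  · subst h0
    have : s = ∅ := Finset.eq_empty_of_forall_notMem fun i => i.elim0
    simp [this]
  · have hc := hadd (S (dg F {⟨0, h0⟩})) (fun i => le_antisymm (hij _ _) (hij _ _))
    have h1 := hc Finset.univ
    have h2 : dg F (Finset.univ : Finset (Fin n)) = 1 := by simp [dg]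
    rw [h2, h.map_one] at h1
    rw [hc s]
    simp only [Finset.card_univ, Fintype.card_fin] at h1
    rw [mul_assoc, mul_comm _ (n : ℝ), ← h1, mul_one]

theorem rank_matrix_unique {n : ℕ} (hn : 0 < n) {S S' : Matrix (Fin n) (Fin n) F → ℝ}
    (h : IsPseudoRankFunction S) (h' : IsPseudoRankFunction S') (M : Matrix (Fin n) (Fin n) F) :
    S M = S' M := by
  classical
  obtain ⟨L, L', D, rfl⟩ := Matrix.Pivot.exists_list_transvec_mul_diagonal_mul_list_transvec M
  have hu : ∀ L : List (Matrix.TransvectionStruct (Fin n) F),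
      IsUnit (L.map Matrix.TransvectionStruct.toMatrix).prod := by
    intro L
    rw [Matrix.isUnit_iff_isUnit_det, Matrix.TransvectionStruct.det_toMatrix_prod]
    exact isUnit_one
  rw [rank_unit_mul h (hu L) (hu L'), rank_unit_mul h' (hu L) (hu L')]
  have key : ∀ {S : Matrix (Fin n) (Fin n) F → ℝ}, IsPseudoRankFunction S →
      S (Matrix.diagonal D) = S (dg F (Finset.univ.filter fun i => D i ≠ 0)) := by
    intro S h
    apply le_antisymm
    · have h1 := h.mul_le_right (Matrix.diagonal D) (dg F (Finset.univ.filter fun i => D i ≠ 0))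
      have h2 : Matrix.diagonal D * dg F (Finset.univ.filter fun i => D i ≠ 0)
          = Matrix.diagonal D := by
        rw [dg, Matrix.diagonal_mul_diagonal]
        congr 1
        funext i
        by_cases hi : D i = 0 <;> simp [hi]
      rwa [h2] at h1
    · have h1 := h.mul_le_right (Matrix.diagonal fun i => (D i)⁻¹) (Matrix.diagonal D)
      have h2 : (Matrix.diagonal fun i => (D i)⁻¹) * Matrix.diagonal D
          = dg F (Finset.univ.filter fun i => D i ≠ 0) := by
        rw [dg, Matrix.diagonal_mul_diagonal]
        congr 1
        funext i
        by_cases hi : D i = 0 <;> simp [hi]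
      rwa [h2] at h1
  rw [key h, key h']
  have hn' : (n : ℝ) ≠ 0 := by exact_mod_cast hn.ne'
  apply mul_right_cancel₀ hn'
  rw [rank_dg h, rank_dg h']

end Uniq

section Final
variable {F : Type} [Field F] [StarRing F] {Q : Type} [Ring Q] [Algebra F Q] [StarRing Q]
  [StarModule F Q] {N : Q → ℝ}

/-- One matrix block as a product. -/
def oneBlock (F : Type) [Field F] [StarRing F] (n : ℕ) :
    Matrix (Fin n) (Fin n) F ≃⋆ₐ[F] ((_ : Fin (0 + 1)) → Matrix (Fin n) (Fin n) F) where
  toFun M := fun _ => M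
  invFun f := f 0
  left_inv M := rfl
  right_inv f := by
    funext i
    have hi : i = 0 := Fin.ext (by have := i.2; simp)
    rw [hi]
  map_mul' _ _ := rfl
  map_add' _ _ := rfl
  map_star' _ := rfl
  map_smul' _ _ := rfl

theorem standard_of_equiv {A : Type} [Ring A] [Algebra F A] [StarRing A] [StarModule F A] {n : ℕ}
    (hn : 0 < n) (e : A ≃⋆ₐ[F] Matrix (Fin n) (Fin n) F) : IsStandardMatricialStarAlgebra F A :=
  ⟨0, fun _ => n, fun _ => hn, ⟨e.trans (oneBlock F n)⟩⟩

theorem iii_of_i (h : IsMFStarCompletion F Q N) :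
    ∀ ε : ℝ, 0 < ε → ∀ (n : ℕ) (x : Fin n → Q),
      ∃ A : StarSubalgebra F Q, IsStandardMatricialStarAlgebra F A ∧
        ∃ y : Fin n → Q, (∀ i, y i ∈ A) ∧ ∀ i, N (x i - y i) < ε := by
  intro ε hε n x
  obtain ⟨hN, -, -, A, hA, γ, hd, -⟩ := h
  have hmono : Monotone A := monotone_nat_of_le_succ hA
  choose y hy hxy using fun i => hd (x i) ε hε
  choose m hm using fun i => Set.mem_iUnion.1 (hy i)
  exact ⟨A (Finset.univ.sup m), standard_of_equiv (by positivity) (γ _), y,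
    fun i => hmono (Finset.le_sup (Finset.mem_univ i)) (hm i), hxy⟩

theorem locApprox_of_iii
    (h : ∀ ε : ℝ, 0 < ε → ∀ (n : ℕ) (x : Fin n → Q),
      ∃ A : StarSubalgebra F Q, IsStandardMatricialStarAlgebra F A ∧
        ∃ y : Fin n → Q, (∀ i, y i ∈ A) ∧ ∀ i, N (x i - y i) < ε) : LocApprox F N := by
  intro ε hε m x
  obtain ⟨A, ⟨k, n, hn, ⟨e⟩⟩, y, hy, hxy⟩ := h ε hε m x
  refine ⟨k, n, hn, A.subtype.comp (e.symm : MatProd F n →⋆ₐ[F] A), fun i => e ⟨y i, hy i⟩, ?_⟩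
  intro i
  have : (A.subtype.comp (e.symm : MatProd F n →⋆ₐ[F] A)) (e ⟨y i, hy i⟩) = y i := by
    simp
  rw [this]
  exact hxy i

theorem locApprox_of_ii (D : UltramatricialStarCompletionData F Q N) : LocApprox F N := by
  intro ε hε m x
  obtain ⟨B, NB, h1, h2, ⟨C, hC, hst, hun⟩, φ, h3, h4, h5⟩ := D
  have hmono : Monotone C := monotone_nat_of_le_succ hC
  choose y hy hxy using fun i => h4 (x i) ε hε
  choose b hb using hy
  choose r hr using fun i => hun (b i)
  obtain ⟨k, n, hn, ⟨e⟩⟩ := hst (Finset.univ.sup r)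
  have hmem : ∀ i, b i ∈ C (Finset.univ.sup r) := fun i =>
    hmono (Finset.le_sup (Finset.mem_univ i)) (hr i)
  refine ⟨k, n, hn, φ.comp ((C (Finset.univ.sup r)).subtype.comp (e.symm : MatProd F n →⋆ₐ[F] C (Finset.univ.sup r))),
    fun i => e ⟨b i, hmem i⟩, ?_⟩
  intro i
  have : (φ.comp ((C (Finset.univ.sup r)).subtype.comp (e.symm : MatProd F n →⋆ₐ[F] C (Finset.univ.sup r)))) (e ⟨b i, hmem i⟩)
      = y i := by
    simp [hb]
  rw [this]
  exact hxy i

theorem ii_of_i (h : IsMFStarCompletion F Q N) :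
    Nonempty (UltramatricialStarCompletionData F Q N) := by
  obtain ⟨hN, -, hcomp, A, hA, γ, hd, -⟩ := h
  have hmono : Monotone A := monotone_nat_of_le_succ hA
  have hmem : ∀ x, x ∈ iSup A ↔ ∃ n, x ∈ A n := by
    intro x
    rw [← SetLike.mem_coe, StarSubalgebra.coe_iSup_of_directed hmono.directed_le]
    simp
  have hle : ∀ n, A n ≤ iSup A := le_iSup A
  have hps : IsPseudoRankFunction (fun b : ↥(iSup A) => N (b : Q)) :=
    hN.1.comp ((iSup A).subtype : ↥(iSup A) →⋆ₐ[F] Q).toRingHom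
  have huniq : ∀ S S' : ↥(iSup A) → ℝ, IsPseudoRankFunction S →
      IsPseudoRankFunction S' → S = S' := by
    intro S S' hS hS'
    funext b
    obtain ⟨n, hn⟩ := (hmem b).1 b.2
    let f : Matrix (Fin (2 ^ n)) (Fin (2 ^ n)) F →⋆ₐ[F] ↥(iSup A) :=
      (StarSubalgebra.inclusion (hle n)).comp ((γ n).symm : _ →⋆ₐ[F] A n)
    have hf : f (γ n ⟨b, hn⟩) = b := by
      apply Subtype.ext
      simp [f]
    have := rank_matrix_unique (by positivity) (hS.comp (f : _ →+* _)) (hS'.comp (f : _ →+* _))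
      (γ n ⟨b, hn⟩)
    simpa [hf] using this
  refine ⟨{
    B := ↥(iSup A)
    NB := fun b => N (b : Q)
    pseudoRank := hps
    extremal := ?_
    ultramatricial := ?_
    φ := (iSup A).subtype
    rank_eq := fun b => rfl
    dense := ?_
    complete := hcomp }⟩
  · refine ⟨hps, ?_⟩
    intro S hS S' hS' _
    exact huniq _ _ hS hps
  · refine ⟨fun n => (A n).comap (iSup A).subtype, fun n x hx => hA n hx, fun n => ?_,
      fun b => (hmem b).1 b.2⟩
    refine standard_of_equiv (n := 2 ^ n) (by positivity) (StarAlgEquiv.trans ?_ (γ n))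
    exact
      { toFun := fun x => ⟨((x : ↥(iSup A)) : Q), x.2⟩
        invFun := fun x => ⟨⟨x, hle n x.2⟩, x.2⟩
        left_inv := fun x => rfl
        right_inv := fun x => rfl
        map_mul' := fun _ _ => rfl
        map_add' := fun _ _ => rfl
        map_star' := fun _ => rfl
        map_smul' := fun _ _ => rfl }
  · intro x ε hε
    obtain ⟨y, hy, hxy⟩ := hd x ε hε
    obtain ⟨n, hn⟩ := Set.mem_iUnion.1 hy
    exact ⟨y, ⟨⟨y, hle n hn⟩, rfl⟩, hxy⟩

end Final

/-- **Corollary 4.10** (Ara–Claramunt). For a `*`-Pythagorean field `(F, *)` with positive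
definite involution and a continuous `*`-factor `Q` over `F` with a dense `*`-subalgebra of
countable `F`-dimension, the following are equivalent: (i) `Q ≅ M_F` as `*`-algebras;
(ii) `Q` is the completion of an ultramatricial `*`-algebra with respect to an extremal
pseudo-rank function; (iii) `Q` is locally approximated by matricial `*`-subalgebras. -/
theorem statement16 (F : Type) [Field F] [StarRing F]
    (hF : PosDefStar F) (hFpyth : StarPythagorean F)
    (Q : Type) [Ring Q] [Algebra F Q] [StarRing Q] [StarModule F Q]
    (hQ : IsContinuousFactor Q) (hQproper : ProperStar Q)
    (NQ : Q → ℝ) (hNQ : IsRankFunction NQ)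
    (Q₀ : StarSubalgebra F Q) (hdim : Module.rank F Q₀ ≤ Cardinal.aleph0)
    (hdense : RankDense NQ (Q₀ : Set Q)) :
    List.TFAE
      [ IsMFStarCompletion F Q NQ,
        Nonempty (UltramatricialStarCompletionData F Q NQ),
        ∀ ε : ℝ, 0 < ε → ∀ (n : ℕ) (x : Fin n → Q),
          ∃ A : StarSubalgebra F Q, IsStandardMatricialStarAlgebra F A ∧
            ∃ y : Fin n → Q, (∀ i, y i ∈ A) ∧ ∀ i, NQ (x i - y i) < ε ] := by
  have hC : Ctx Q NQ := ⟨hQ.2.2.1, hQ.2.1, hQproper, hNQ⟩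
  have key : LocApprox F NQ → IsMFStarCompletion F Q NQ := fun hL =>
    mf_of_locApprox hF hFpyth
      (ctx2_of_locApprox hF hFpyth hC hQ.1 hQ.2.2.2.2 hL) hL Q₀ hdim hdense
  tfae_have 1 → 2 := ii_of_i
  tfae_have 2 → 1 := fun ⟨D⟩ => key (locApprox_of_ii D)
  tfae_have 1 → 3 := iii_of_i
  tfae_have 3 → 1 := fun h => key (locApprox_of_iii h)
  tfae_finish

end AraClaramunt
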